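/- Let Γ be a Dini-smooth Jordan curve (a Jordan curve admitting a parametrization with continuous nonvanishing derivative whose modulus of continuity ω satisfies ∫₀¹ ω(t)/t dt < ∞). Then φ(z)^{−n} F_n(z) → 1 as n → ∞ uniformly for z ∈ Γ, and in particular lim_{n→∞} ‖F_n‖_Γ = 1. -/

import Mathlib

open Filter Topology MeasureTheory Set

noncomputable section

/-- The supremum norm of `f` over the set `Γ`. -/
def supNorm (Γ : Set ℂ) (f : ℂ → ℂ) : ℝ := sSup ((fun z => ‖f z‖) '' Γ)

/-- `Γ` is a Jordan curve: the image of a continuous `2π`-periodic map `ℝ → ℂ` that is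
injective modulo the period. -/
def IsJordanCurve (Γ : Set ℂ) : Prop :=
  ∃ f : ℝ → ℂ, Continuous f ∧ Function.Periodic f (2 * Real.pi) ∧
    (∀ s t : ℝ, f s = f t → ∃ n : ℤ, t - s = n * (2 * Real.pi)) ∧
    Γ = Set.range f

/-- The modulus of continuity of `g` on the interval `[a, b]`, evaluated at `t`. -/
def modCont (g : ℝ → ℂ) (a b t : ℝ) : ℝ :=
  sSup {d : ℝ | ∃ s₁ ∈ Set.Icc a b, ∃ s₂ ∈ Set.Icc a b, |s₁ - s₂| ≤ t ∧ d = ‖g s₁ - g s₂‖}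

/-- `γ`, with derivative `γ'`, parametrizes a Dini-smooth Jordan arc on `[a, b]`:
`γ'` is continuous and nonvanishing on `[a, b]` and its modulus of continuity `ω`
satisfies `∫₀¹ ω(t)/t dt < ∞`. -/
structure IsDiniSmoothArc (γ γ' : ℝ → ℂ) (a b : ℝ) : Prop where
  lt : a < b
  inj : Set.InjOn γ (Set.Icc a b)
  deriv : ∀ s ∈ Set.Icc a b, HasDerivWithinAt γ (γ' s) (Set.Icc a b) s
  cont : ContinuousOn γ' (Set.Icc a b)
  nonzero : ∀ s ∈ Set.Icc a b, γ' s ≠ 0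
  dini : MeasureTheory.IntegrableOn (fun t => modCont γ' a b t / t) (Set.Ioc (0 : ℝ) 1)

/-- A piecewise Dini-smooth Jordan curve: a Jordan curve which is the union of finitely many
Dini-smooth arcs. -/
def IsPiecewiseDiniSmoothJordanCurve (Γ : Set ℂ) : Prop :=
  IsJordanCurve Γ ∧
    ∃ (N : ℕ) (γ γ' : Fin N → ℝ → ℂ) (a b : Fin N → ℝ),
      (∀ i, IsDiniSmoothArc (γ i) (γ' i) (a i) (b i)) ∧
      Γ = ⋃ i, γ i '' Set.Icc (a i) (b i)

/-- The unbounded connected component `Ω` of the complement of `Γ` (in the finite plane). -/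
def exteriorDomain (Γ : Set ℂ) : Set ℂ :=
  {z | z ∈ Γᶜ ∧ ¬ Bornology.IsBounded (connectedComponentIn Γᶜ z)}

/-- `φ` is the canonical exterior conformal map of `Γ` onto `{|w| > 1}` with `φ(∞) = ∞` and
`φ(z)/z → c⁻¹` as `z → ∞`; the constant `c` is then the logarithmic capacity of `Γ`. -/
structure IsExteriorMap (Γ : Set ℂ) (φ : ℂ → ℂ) (c : ℝ) : Prop where
  cpos : 0 < c
  diff : DifferentiableOn ℂ φ (exteriorDomain Γ)
  bij : Set.BijOn φ (exteriorDomain Γ) {w : ℂ | 1 < ‖w‖}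
  tendsto : Filter.Tendsto (fun z => φ z / z)
    (Bornology.cobounded ℂ ⊓ Filter.principal (exteriorDomain Γ)) (nhds ((c : ℂ)⁻¹))

/-- `F` is the `n`-th Faber polynomial of `Γ`: the unique polynomial with
`φ(z)^n − F(z) → 0` as `z → ∞` in the exterior domain. -/
def IsFaberPoly (Γ : Set ℂ) (φ : ℂ → ℂ) (n : ℕ) (F : Polynomial ℂ) : Prop :=
  Filter.Tendsto (fun z => φ z ^ n - F.eval z)
    (Bornology.cobounded ℂ ⊓ Filter.principal (exteriorDomain Γ)) (nhds 0)

/-- `ψ` is the inverse of `φ`, extended to a homeomorphism of `{|w| ≥ 1}` onto the closure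
of the exterior domain; on the unit circle it parametrizes `Γ`. -/
structure IsExteriorParam (Γ : Set ℂ) (φ ψ : ℂ → ℂ) : Prop where
  cont : ContinuousOn ψ {w : ℂ | 1 ≤ ‖w‖}
  inj : Set.InjOn ψ {w : ℂ | 1 ≤ ‖w‖}
  inv : ∀ w : ℂ, 1 < ‖w‖ → ψ w ∈ exteriorDomain Γ ∧ φ (ψ w) = w
  boundary : ∀ w : ℂ, ‖w‖ = 1 → ψ w ∈ Γ
  boundary_surj : ∀ z ∈ Γ, ∃ w : ℂ, ‖w‖ = 1 ∧ ψ w = z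

/-- `T` is the `n`-th Chebyshev polynomial of `Γ`: the monic polynomial of degree `n`
minimizing the supremum norm over `Γ`. -/
def IsChebyshevPoly (Γ : Set ℂ) (n : ℕ) (T : Polynomial ℂ) : Prop :=
  T.Monic ∧ T.natDegree = n ∧
    ∀ P : Polynomial ℂ, P.Monic → P.natDegree = n →
      supNorm Γ (fun z => T.eval z) ≤ supNorm Γ (fun z => P.eval z)

/-- `v` is a secant-argument function of `Γ = ψ(unit circle)` at `θ` (relative to `α` with
`α < θ < α + 2π`): a bounded-variation branch of `t ↦ arg (ψ(e^{it}) − ψ(e^{iθ}))` on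
`[α, α + 2π]`, continuous on `[α, θ)` and on `(θ, α + 2π]`, normalized by `v θ = v(θ+)`
and by requiring the jump `v(θ+) − v(θ−)` to lie in `[0, 2π]`. -/
structure IsSecantArg (ψ : ℂ → ℂ) (θ α : ℝ) (v : ℝ → ℝ) : Prop where
  hα : α < θ
  hθ : θ < α + 2 * Real.pi
  bv : BoundedVariationOn v (Set.Icc α (α + 2 * Real.pi))
  contBefore : ContinuousOn v (Set.Ico α θ)
  contAfter : ContinuousOn v (Set.Ioc θ (α + 2 * Real.pi))
  rightCont : ContinuousWithinAt v (Set.Ici θ) θ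
  jump_mem : ∃ L : ℝ, Filter.Tendsto v (nhdsWithin θ (Set.Iio θ)) (nhds L) ∧
    v θ - L ∈ Set.Icc 0 (2 * Real.pi)
  branch : ∀ t ∈ Set.Icc α (α + 2 * Real.pi), t ≠ θ →
    Complex.exp (Complex.I * (v t : ℂ))
      = (ψ (Complex.exp (Complex.I * (t : ℂ))) - ψ (Complex.exp (Complex.I * (θ : ℂ))))
        / ((‖ψ (Complex.exp (Complex.I * (t : ℂ))) - ψ (Complex.exp (Complex.I * (θ : ℂ)))‖ : ℂ))

/-- The exterior angle of `Γ = ψ(unit circle)` at the boundary point `ψ(e^{iθ})` equals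
`lam * π`, expressed through the jump `v(θ+) − v(θ−) = lam * π` of a secant-argument
function at `θ`. -/
def HasExteriorAngleAt (ψ : ℂ → ℂ) (θ lam : ℝ) : Prop :=
  ∃ (α : ℝ) (v : ℝ → ℝ), IsSecantArg ψ θ α v ∧
    Filter.Tendsto v (nhdsWithin θ (Set.Iio θ)) (nhds (v θ - lam * Real.pi))

/-- The set `Θ_Γ = {θ_k + 2πj}` of corner parameters modulo `2π`. -/
def cornerSet {l : ℕ} (θk : Fin l → ℝ) : Set ℝ :=
  {x | ∃ (k : Fin l) (j : ℤ), x = θk k + j * (2 * Real.pi)}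

/-- `(μp, μn)` realizes the Lebesgue–Stieltjes (signed) measure `dv` of `v` on `(α, β]`:
both are finite measures and `μp − μn` has the increments of `v`. -/
structure IsLSPair (v : ℝ → ℝ) (α β : ℝ) (μp μn : MeasureTheory.Measure ℝ) : Prop where
  finp : MeasureTheory.IsFiniteMeasure μp
  finn : MeasureTheory.IsFiniteMeasure μn
  incr : ∀ s t : ℝ, α ≤ s → s ≤ t → t ≤ β →
    (μp (Set.Ioc s t)).toReal - (μn (Set.Ioc s t)).toReal = v t - v s


/-- The global modulus of continuity of `g : ℝ → ℂ`, evaluated at `t`. -/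
def modContGlobal (g : ℝ → ℂ) (t : ℝ) : ℝ :=
  sSup {d : ℝ | ∃ s₁ s₂ : ℝ, |s₁ - s₂| ≤ t ∧ d = ‖g s₁ - g s₂‖}

/-- `Γ` is a Dini-smooth Jordan curve: it admits a (periodic) parametrization with continuous
nonvanishing derivative whose modulus of continuity `ω` satisfies `∫₀¹ ω(t)/t dt < ∞`. -/
def IsDiniSmoothJordanCurve (Γ : Set ℂ) : Prop :=
  ∃ f f' : ℝ → ℂ, Continuous f ∧ Function.Periodic f (2 * Real.pi) ∧
    (∀ s t : ℝ, f s = f t → ∃ n : ℤ, t - s = n * (2 * Real.pi)) ∧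
    (∀ s : ℝ, HasDerivAt f (f' s) s) ∧ Continuous f' ∧ (∀ s : ℝ, f' s ≠ 0) ∧
    MeasureTheory.IntegrableOn (fun t => modContGlobal f' t / t) (Set.Ioc (0 : ℝ) 1) ∧
    Γ = Set.range f

/-! In the coordinate `u = w⁻¹` of the unit disk the exterior map becomes `Ψ u = u * ψ u⁻¹`, and
the boundary correspondence is an increasing change of angle `τ`, with `f s = ψ (exp (-i τ s))`.
Cauchy's formula, together with its complex conjugate, represents `π F_n(z)` for `z` inside `Γ` as
the integral of `exp (-i n τ)` against `-Im (f' / (f - z))`. As `z` approaches `f s` along the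
normal, the jump of the double layer potential gives

`F_n (f s) = exp (-i n τ s) - π⁻¹ ∫ exp (-i n τ (s + x)) k(s, x) dx`,
`k(s, x) = Im (f' (s + x) / (f (s + x) - f s))`,

so that the integral has to tend to `0` uniformly in `s`. Dini-smoothness bounds `|k(s, x)|` by a
constant times the integrable function `ω |x| / |x|`; hence a small neighbourhood of the diagonal
contributes little, uniformly in `s`, and away from it `k` is continuous.

What remains is a Riemann–Lebesgue lemma for the sequence `exp (-i n τ)`, proved without knowing
that `τ` is absolutely continuous. The Poisson integral of the measure `df` shows that `ψ'` has
bounded `L¹` means on circles; as `ψ'` has no zeros, its square root has bounded `L²` means, so the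
Taylor coefficients of `ψ'`, which are `∫ exp (-i n τ) f'` up to constants, tend to `0`. A
continuous `g` is then handled by approximating `g / f'` by trigonometric polynomials in `τ`. -/

/-! ### Taylor coefficients on the unit disk -/

section TaylorCoeff

/-- The `n`-th Taylor coefficient of `A` at the origin. -/
def taylorCoeff (A : ℂ → ℂ) (n : ℕ) : ℂ := iteratedDeriv n A 0 / n.factorial

variable {A g : ℂ → ℂ} {ρ : ℝ}

lemma integral_zpow_neg_mul_circleMap (h0 : 0 < ρ) (hA : DiffContOnCl ℂ A (Metric.ball 0 ρ))
    (n : ℕ) :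
    ∫ θ in 0..2 * Real.pi, circleMap 0 ρ θ ^ (-(n : ℤ)) * A (circleMap 0 ρ θ)
      = 2 * Real.pi * taylorCoeff A n := by
  have hcauchy := hA.circleIntegral_one_div_sub_center_pow_smul h0 n
  have hintegrand : ∀ θ : ℝ, deriv (circleMap 0 ρ) θ * (1 / (circleMap 0 ρ θ - 0) ^ (n + 1) *
      A (circleMap 0 ρ θ)) = Complex.I * (circleMap 0 ρ θ ^ (-(n : ℤ)) * A (circleMap 0 ρ θ)) := by
    intro θ
    have hne : circleMap 0 ρ θ ≠ 0 := circleMap_ne_center h0.ne'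
    simp only [deriv_circleMap, sub_zero, zpow_neg, zpow_natCast]
    field_simp
    ring
  simp only [circleIntegral, smul_eq_mul, hintegrand, intervalIntegral.integral_const_mul]
    at hcauchy
  apply mul_left_cancel₀ Complex.I_ne_zero
  rw [hcauchy, taylorCoeff]
  ring

lemma taylorCoeff_sq (hg : AnalyticAt ℂ g 0) (n : ℕ) :
    taylorCoeff (fun u => g u ^ 2) n
      = ∑ k ∈ Finset.range (n + 1), taylorCoeff g k * taylorCoeff g (n - k) := by
  simp only [taylorCoeff, pow_two, iteratedDeriv_fun_mul hg.contDiffAt hg.contDiffAt,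
    Finset.sum_div]
  refine Finset.sum_congr rfl fun k hk => ?_
  rw [Nat.cast_choose ℂ (Nat.lt_succ_iff.1 (Finset.mem_range.1 hk))]
  have hfac (m : ℕ) : (m.factorial : ℂ) ≠ 0 := by exact_mod_cast m.factorial_ne_zero
  have := hfac n
  field_simp

lemma fourierCoeffOn_circleMap (h0 : 0 < ρ) (hg : DiffContOnCl ℂ g (Metric.ball 0 ρ)) (k : ℕ) :
    fourierCoeffOn Real.two_pi_pos (fun θ : ℝ => g (circleMap 0 ρ θ)) k
      = ρ ^ k * taylorCoeff g k := by
  have hρ : (ρ : ℂ) ≠ 0 := by exact_mod_cast h0.ne'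
  have hpi : (Real.pi : ℂ) ≠ 0 := by exact_mod_cast Real.pi_ne_zero
  have hintegrand : ∀ θ : ℝ, fourier (-(k : ℤ)) (θ : AddCircle (2 * Real.pi - 0)) •
      g (circleMap 0 ρ θ)
        = (ρ : ℂ) ^ k * (circleMap 0 ρ θ ^ (-(k : ℤ)) * g (circleMap 0 ρ θ)) := by
    intro θ
    have hexp : 2 * (Real.pi : ℂ) * Complex.I * ((-(k : ℤ) : ℤ) : ℂ) * θ
        / ((2 * Real.pi - 0 : ℝ) : ℂ) = ((-(k : ℤ) : ℤ) : ℂ) * (θ * Complex.I) := by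
      push_cast
      field_simp
      ring
    rw [fourier_coe_apply, circleMap_zero, mul_zpow, ← Complex.exp_int_mul, smul_eq_mul, hexp,
      zpow_neg, zpow_natCast]
    field_simp
  rw [fourierCoeffOn_eq_integral]
  simp only [hintegrand, intervalIntegral.integral_const_mul,
    integral_zpow_neg_mul_circleMap h0 hg, sub_zero, Complex.real_smul]
  push_cast
  field_simp

lemma sum_sq_taylorCoeff_le (h0 : 0 < ρ) (hg : DiffContOnCl ℂ g (Metric.ball 0 ρ)) (N : ℕ) :
    ∑ k ∈ Finset.range N, (ρ ^ k * ‖taylorCoeff g k‖) ^ 2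
      ≤ (2 * Real.pi)⁻¹ * ∫ θ in 0..2 * Real.pi, ‖g (circleMap 0 ρ θ)‖ ^ 2 := by
  have hcont : Continuous fun θ : ℝ => g (circleMap 0 ρ θ) :=
    hg.continuousOn_ball.comp_continuous (continuous_circleMap 0 ρ)
      (circleMap_mem_closedBall 0 h0.le)
  have hL2 : MemLp (fun θ : ℝ => g (circleMap 0 ρ θ)) 2
      (volume.restrict (Ioc 0 (2 * Real.pi))) := by
    obtain ⟨C, hC⟩ :=
      (isCompact_Icc (a := 0) (b := 2 * Real.pi)).exists_bound_of_continuousOn hcont.continuousOn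
    exact MemLp.of_bound hcont.aestronglyMeasurable C <|
      (ae_restrict_mem measurableSet_Ioc).mono fun θ hθ => hC θ (Ioc_subset_Icc_self hθ)
  have hbessel := sum_le_hasSum ((Finset.range N).map ⟨((↑) : ℕ → ℤ), Nat.cast_injective⟩)
    (fun _ _ => by positivity) (hasSum_sq_fourierCoeffOn Real.two_pi_pos hL2)
  simpa [fourierCoeffOn_circleMap h0 hg, abs_of_pos h0] using hbessel

lemma summable_sq_taylorCoeff (hg : DifferentiableOn ℂ g (Metric.ball 0 1)) {V : ℝ}
    (hV : ∀ ρ : ℝ, 0 < ρ → ρ < 1 → ∫ θ in 0..2 * Real.pi, ‖g (circleMap 0 ρ θ)‖ ^ 2 ≤ V) :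
    Summable fun k => ‖taylorCoeff g k‖ ^ 2 := by
  refine summable_of_sum_range_le (c := (2 * Real.pi)⁻¹ * V) (fun k => by positivity) fun N => ?_
  have hlim : Tendsto (fun ρ : ℝ => ∑ k ∈ Finset.range N, (ρ ^ k * ‖taylorCoeff g k‖) ^ 2)
      (𝓝[<] 1) (𝓝 (∑ k ∈ Finset.range N, (1 ^ k * ‖taylorCoeff g k‖) ^ 2)) :=
    (Continuous.tendsto (by fun_prop) 1).mono_left nhdsWithin_le_nhds
  simp only [one_pow, one_mul] at hlim
  refine le_of_tendsto hlim ?_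
  filter_upwards [Ioo_mem_nhdsLT (zero_lt_one' ℝ)] with ρ hρ
  refine (sum_sq_taylorCoeff_le hρ.1
    (hg.diffContOnCl_ball (Metric.closedBall_subset_ball hρ.2)) N).trans ?_
  gcongr
  exact hV ρ hρ.1 hρ.2

lemma norm_sum_Ico_mul_le {R : Type*} [SeminormedRing R] {a b : ℕ → R}
    (ha : Summable fun k => ‖a k‖ ^ 2) (hb : Summable fun k => ‖b k‖ ^ 2) (N n : ℕ) :
    ‖∑ k ∈ Finset.Ico N (n + 1), a k * b (n - k)‖
      ≤ √(∑' k, ‖a (k + N)‖ ^ 2) * √(∑' k, ‖b k‖ ^ 2) := by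
  calc ‖∑ k ∈ Finset.Ico N (n + 1), a k * b (n - k)‖
      ≤ ∑ k ∈ Finset.Ico N (n + 1), ‖a k‖ * ‖b (n - k)‖ :=
        norm_sum_le_of_le _ fun k _ => norm_mul_le _ _
    _ ≤ √(∑ k ∈ Finset.Ico N (n + 1), ‖a k‖ ^ 2) * √(∑ k ∈ Finset.Ico N (n + 1), ‖b (n - k)‖ ^ 2) :=
        Real.sum_mul_le_sqrt_mul_sqrt _ _ _
    _ ≤ √(∑' k, ‖a (k + N)‖ ^ 2) * √(∑' k, ‖b k‖ ^ 2) := by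
        gcongr
        · rw [Finset.sum_Ico_eq_sum_range]
          simp only [add_comm N]
          exact ((summable_nat_add_iff N).2 ha).sum_le_tsum _ fun k _ => by positivity
        · have hinj : Set.InjOn (fun k => n - k) (Finset.Ico N (n + 1)) := by
            intro j hj k hk hjk
            simp only [Finset.coe_Ico, mem_Ico] at hj hk hjk
            omega
          rw [← Finset.sum_image (f := fun k => ‖b k‖ ^ 2) hinj]
          exact hb.sum_le_tsum _ fun k _ => by positivity

lemma tendsto_sum_range_mul_of_summable_sq {R : Type*} [SeminormedRing R] {a b : ℕ → R}
    (ha : Summable fun k => ‖a k‖ ^ 2) (hb : Summable fun k => ‖b k‖ ^ 2) :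
    Tendsto (fun n => ∑ k ∈ Finset.range (n + 1), a k * b (n - k)) atTop (𝓝 0) := by
  have hb0 : Tendsto b atTop (𝓝 0) := by
    simpa [tendsto_zero_iff_norm_tendsto_zero (f := b)] using hb.tendsto_atTop_zero.sqrt
  have htail : Tendsto (fun N => √(∑' k, ‖a (k + N)‖ ^ 2) * √(∑' k, ‖b k‖ ^ 2)) atTop (𝓝 0) := by
    simpa using (tendsto_sum_nat_add fun k => ‖a k‖ ^ 2).sqrt.mul_const √(∑' k, ‖b k‖ ^ 2)
  rw [Metric.tendsto_nhds]
  intro ε hε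
  obtain ⟨N, hN⟩ := (htail.eventually (gt_mem_nhds (half_pos hε))).exists
  have hhead : Tendsto (fun n => ∑ k ∈ Finset.range N, a k * b (n - k)) atTop (𝓝 0) := by
    simpa using tendsto_finsetSum (Finset.range N) fun k _ =>
      (hb0.comp (tendsto_sub_atTop_nat k)).const_mul (a k)
  filter_upwards [hhead.norm.eventually (gt_mem_nhds (norm_zero.trans_lt (half_pos hε))),
    eventually_ge_atTop N] with n hn hNn
  rw [dist_zero_right, ← Finset.sum_range_add_sum_Ico _ (by omega : N ≤ n + 1)]
  linarith [norm_add_le (∑ k ∈ Finset.range N, a k * b (n - k))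
    (∑ k ∈ Finset.Ico N (n + 1), a k * b (n - k)), norm_sum_Ico_mul_le ha hb N n]

lemma exists_differentiableOn_sq_eq {Q : ℂ → ℂ} {z : ℂ} {R : ℝ}
    (hQ : DifferentiableOn ℂ Q (Metric.ball z R)) (hne : ∀ u ∈ Metric.ball z R, Q u ≠ 0) :
    ∃ g : ℂ → ℂ, DifferentiableOn ℂ g (Metric.ball z R) ∧
      ∀ u ∈ Metric.ball z R, g u ^ 2 = Q u := by
  obtain ⟨L, hL⟩ := ((hQ.deriv Metric.isOpen_ball).div hQ hne).isExactOn_ball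
  have hderiv : ∀ u ∈ Metric.ball z R, HasDerivAt (fun u => Q u * Complex.exp (-L u)) 0 u := by
    intro u hu
    convert! (hQ.hasDerivAt (Metric.isOpen_ball.mem_nhds hu)).mul (hL u hu).neg.cexp using 1
    simp only [Pi.div_apply]
    field_simp [hne u hu]
    ring
  obtain hempty | ⟨u₀, hu₀⟩ := (Metric.ball z R).eq_empty_or_nonempty
  · exact ⟨0, by simp [hempty]⟩
  have hconst : ∀ u ∈ Metric.ball z R, Q u * Complex.exp (-L u) = Q u₀ * Complex.exp (-L u₀) :=
    fun u hu => Metric.isOpen_ball.is_const_of_deriv_eq_zero (convex_ball z R).isPreconnected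
      (fun v hv => (hderiv v hv).differentiableAt.differentiableWithinAt)
      (fun v hv => (hderiv v hv).deriv) hu hu₀
  obtain ⟨a, ha⟩ := IsAlgClosed.exists_pow_nat_eq (Q u₀ * Complex.exp (-L u₀)) two_pos
  refine ⟨fun u => a * Complex.exp (L u / 2), fun u hu =>
    ((hL u hu).differentiableAt.div_const 2).cexp.const_mul a |>.differentiableWithinAt,
    fun u hu => ?_⟩
  rw [mul_pow, ha, ← hconst u hu, ← Complex.exp_nat_mul, mul_assoc, ← Complex.exp_add]
  simp [mul_div_cancel₀]

-- The square root of `Q` is an `H²` function, so the coefficients of `Q` are convolutions of `ℓ²`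
-- sequences.
lemma tendsto_taylorCoeff_of_integral_norm_le {Q : ℂ → ℂ}
    (hQ : DifferentiableOn ℂ Q (Metric.ball 0 1)) (hne : ∀ u ∈ Metric.ball (0 : ℂ) 1, Q u ≠ 0)
    {V : ℝ} (hV : ∀ ρ : ℝ, 0 < ρ → ρ < 1 → ∫ θ in 0..2 * Real.pi, ‖Q (circleMap 0 ρ θ)‖ ≤ V) :
    Tendsto (taylorCoeff Q) atTop (𝓝 0) := by
  obtain ⟨g, hg, hgQ⟩ := exists_differentiableOn_sq_eq hQ hne
  have h0 : (0 : ℂ) ∈ Metric.ball (0 : ℂ) 1 := Metric.mem_ball_self one_pos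
  have hQg : (fun u => g u ^ 2) =ᶠ[𝓝 0] Q := by
    filter_upwards [Metric.isOpen_ball.mem_nhds h0] using hgQ
  have hsummable : Summable fun k => ‖taylorCoeff g k‖ ^ 2 := by
    refine summable_sq_taylorCoeff hg fun ρ hρ0 hρ1 => (hV ρ hρ0 hρ1).trans_eq' ?_
    congr! 3 with θ
    rw [← norm_pow, hgQ _ (by simp [abs_of_pos hρ0, hρ1])]
  refine (tendsto_sum_range_mul_of_summable_sq hsummable hsummable).congr fun n => ?_
  rw [← taylorCoeff_sq (hg.analyticOnNhd Metric.isOpen_ball 0 h0), taylorCoeff, taylorCoeff,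
    hQg.iteratedDeriv_eq]

end TaylorCoeff

/-! ### Integration along a reparametrized circle -/

section Reparametrization

lemma tendsto_integral_comp_circleMap_mul {Φ : ℂ → ℂ}
    (hΦ : ContinuousOn Φ (Metric.closedBall 0 1)) {τ : ℝ → ℝ} (hτ : Continuous τ) {g : ℝ → ℂ}
    (hg : Continuous g) (a b : ℝ) :
    Tendsto (fun r : ℝ => ∫ s in a..b, Φ (circleMap 0 r (τ s)) * g s) (𝓝[<] 1)
      (𝓝 (∫ s in a..b, Φ (circleMap 0 1 (τ s)) * g s)) := by
  obtain ⟨C, hC⟩ := (isCompact_closedBall (0 : ℂ) 1).exists_bound_of_continuousOn hΦ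
  have hmem {r : ℝ} (hr : r ∈ Ioc 0 1) (t : ℝ) : circleMap 0 r t ∈ Metric.closedBall (0 : ℂ) 1 :=
    Metric.closedBall_subset_closedBall hr.2 (circleMap_mem_closedBall 0 hr.1.le t)
  have hIoo : Ioo (0 : ℝ) 1 ∈ 𝓝[<] (1 : ℝ) := Ioo_mem_nhdsLT zero_lt_one
  refine intervalIntegral.tendsto_integral_filter_of_dominated_convergence (fun s => C * ‖g s‖)
    ?_ ?_ ((by fun_prop : Continuous fun s => C * ‖g s‖).intervalIntegrable a b) ?_
  · filter_upwards [hIoo] with r hr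
    exact ((hΦ.comp_continuous ((continuous_circleMap 0 r).comp hτ) fun s =>
      hmem (Ioo_subset_Ioc_self hr) _).mul hg).aestronglyMeasurable
  · filter_upwards [hIoo] with r hr
    refine Eventually.of_forall fun s _ => ?_
    rw [norm_mul]
    gcongr
    exact hC _ (hmem (Ioo_subset_Ioc_self hr) _)
  · refine Eventually.of_forall fun s _ => Tendsto.mul_const _ ?_
    refine (hΦ _ (hmem ⟨one_pos, le_rfl⟩ (τ s))).tendsto.comp (tendsto_nhdsWithin_iff.2 ⟨?_, ?_⟩)
    · exact (by fun_prop : Continuous fun r : ℝ => circleMap 0 r (τ s)).continuousAt.mono_left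
        nhdsWithin_le_nhds
    · filter_upwards [hIoo] with r hr using hmem (Ioo_subset_Ioc_self hr) _

variable {e : ℝ ≃o ℝ} {X X' G G' : ℝ → ℂ}

lemma hasDerivAt_integral_mul_comp_symm_sub (hX' : Continuous X')
    (hG : ∀ s, HasDerivAt G (G' s) s) (hG' : Continuous G') (s : ℝ) :
    HasDerivAt (fun y => ∫ t in e s..e y, X' t * (G (e.symm t) - G s)) 0 s := by
  obtain ⟨C, hC⟩ := (isCompact_Icc (a := e (s - 1)) (b := e (s + 1))).exists_bound_of_continuousOn
    hX'.continuousOn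
  obtain ⟨M, hM⟩ := (isCompact_Icc (a := s - 1) (b := s + 1)).exists_bound_of_continuousOn
    hG'.continuousOn
  have hs : s ∈ Icc (s - 1) (s + 1) := by constructor <;> linarith
  have hbound : ∀ y ∈ Icc (s - 1) (s + 1),
      ‖∫ t in e s..e y, X' t * (G (e.symm t) - G s)‖ ≤ C * (M * |y - s|) * |e y - e s| := by
    intro y hy
    refine intervalIntegral.norm_integral_le_of_norm_le_const fun t ht => ?_
    have hts : e.symm t ∈ uIcc s y := by
      simpa using e.symm.monotone.mapsTo_uIcc (uIoc_subset_uIcc ht)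
    have ht' := uIcc_subset_Icc hs hy hts
    have hC' := hC t ⟨e.le_symm_apply.1 ht'.1, e.symm_apply_le.1 ht'.2⟩
    have hM0 : 0 ≤ M := (norm_nonneg _).trans (hM s hs)
    rw [norm_mul]
    gcongr
    · exact (norm_nonneg _).trans hC'
    · refine ((convex_Icc _ _).norm_image_sub_le_of_norm_hasDerivWithin_le
        (fun x _ => (hG x).hasDerivWithinAt) hM hs ht').trans ?_
      gcongr
      exact Set.abs_sub_left_of_mem_uIcc hts
  have hsmall : Tendsto (fun y => C * M * |e y - e s|) (𝓝 s) (𝓝 0) :=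
    Continuous.tendsto' (by fun_prop) _ _ (by simp)
  rw [hasDerivAt_iff_isLittleO]
  simp only [intervalIntegral.integral_same, sub_zero, smul_zero]
  have hproduct : (fun y => C * M * |e y - e s| * (y - s)) =o[𝓝 s] fun y => y - s := by
    simpa using ((Asymptotics.isLittleO_one_iff ℝ).2 hsmall).mul_isBigO
      (Asymptotics.isBigO_refl (fun y : ℝ => y - s) (𝓝 s))
  refine Asymptotics.IsBigO.trans_isLittleO (.of_norm_eventuallyLE ?_) hproduct.norm_left
  filter_upwards [Icc_mem_nhds (sub_one_lt s) (lt_add_one s)] with y hy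
  refine ((hbound y hy).trans_eq (by ring)).trans (le_of_le_of_eq (le_abs_self _) ?_ :
    C * M * |e y - e s| * |y - s| ≤ _)
  simp [abs_mul]

lemma integral_comp_mul_deriv_eq_sub (hX : ∀ t, HasDerivAt X (X' t) t) (hX' : Continuous X')
    (hG : ∀ s, HasDerivAt G (G' s) s) (hG' : Continuous G') (a b : ℝ) :
    ∫ s in a..b, X (e s) * G' s
      = X (e b) * G b - X (e a) * G a - ∫ t in e a..e b, X' t * G (e.symm t) := by
  have hXc : Continuous X := continuous_iff_continuousAt.2 fun t => (hX t).continuousAt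
  have hGc : Continuous G := continuous_iff_continuousAt.2 fun s => (hG s).continuousAt
  have hint (x y : ℝ) : IntervalIntegrable (fun t => X' t * G (e.symm t)) volume x y :=
    (hX'.mul (hGc.comp e.symm.continuous)).intervalIntegrable x y
  set H : ℝ → ℂ := fun y => X (e y) * G y - ∫ t in e a..e y, X' t * G (e.symm t) with hH
  have hderiv (s : ℝ) : HasDerivAt H (X (e s) * G' s) s := by
    have hdecomp (y : ℝ) : H y = H s + X (e y) * (G y - G s)
        - ∫ t in e s..e y, X' t * (G (e.symm t) - G s) := by
      have hXint : ∫ t in e s..e y, X' t = X (e y) - X (e s) :=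
        intervalIntegral.integral_eq_sub_of_hasDerivAt (fun t _ => hX t)
          (hX'.intervalIntegrable _ _)
      have hsplit := intervalIntegral.integral_add_adjacent_intervals
        (hint (e a) (e s)) (hint (e s) (e y))
      simp only [hH, mul_sub]
      rw [intervalIntegral.integral_sub (hint _ _)
        ((hX'.mul_const _).intervalIntegrable _ _), intervalIntegral.integral_mul_const,
        hXint, ← hsplit]
      ring
    have hmain : HasDerivAt (fun y => X (e y) * (G y - G s)) (X (e s) * G' s) s := by
      rw [hasDerivAt_iff_tendsto_slope]
      refine ((hXc.comp e.continuous).continuousAt.mono_left nhdsWithin_le_nhds |>.mul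
        (hasDerivAt_iff_tendsto_slope.1 (hG s))).congr fun y => ?_
      simp [slope, mul_left_comm]
    exact (((hmain.const_add (H s)).sub (hasDerivAt_integral_mul_comp_symm_sub hX' hG hG' s))
      |>.congr_deriv (sub_zero _)).congr_of_eventuallyEq (.of_forall hdecomp)
  rw [intervalIntegral.integral_eq_sub_of_hasDerivAt (fun s _ => hderiv s)
    (((hXc.comp e.continuous).mul hG').intervalIntegrable _ _)]
  simp only [hH, intervalIntegral.integral_same]
  ring

end Reparametrization

/-! ### The exterior of a loop in disk coordinates -/

/-- The exterior of the loop `f` in the coordinate `u = w⁻¹` of the unit disk: if `ψ` is the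
exterior conformal map, then `Ψ u = u * ψ u⁻¹`, the factor `u` cancelling the pole of `ψ` at `∞`,
and `τ` is the change of angle with `f s = ψ (exp (-i τ s))`. -/
structure IsDiskParam (Ψ : ℂ → ℂ) (f f' : ℝ → ℂ) (τ : ℝ ≃o ℝ) : Prop where
  diffContOnCl : DiffContOnCl ℂ Ψ (Metric.ball 0 1)
  map_circleMap : ∀ s, Ψ (circleMap 0 1 (τ s)) = circleMap 0 1 (τ s) * f s
  angle_add_two_pi : ∀ s, τ (s + 2 * Real.pi) = τ s + 2 * Real.pi
  continuous_deriv : Continuous f'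
  hasDerivAt : ∀ s, HasDerivAt f (f' s) s

/-- The derivative of the exterior conformal map `ψ w = w * Ψ w⁻¹` at `w = u⁻¹`. -/
def exteriorDeriv (Ψ : ℂ → ℂ) (u : ℂ) : ℂ := Ψ u - u * deriv Ψ u

lemma circleMap_zero_eq_mul (r t : ℝ) : circleMap 0 r t = r * circleMap 0 1 t := by
  simp [circleMap_zero]

lemma circleMap_mem_unitBall {r : ℝ} (hr : r ∈ Ioo (0 : ℝ) 1) (t : ℝ) :
    circleMap 0 r t ∈ Metric.ball (0 : ℂ) 1 := by
  rw [mem_ball_zero_iff, norm_circleMap_zero, abs_of_pos hr.1]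
  exact hr.2

lemma periodic_of_hasDerivAt {X X' : ℝ → ℂ} {T : ℝ} (hX : ∀ t, HasDerivAt X (X' t) t)
    (hT : Function.Periodic X T) : Function.Periodic X' T := by
  intro t
  refine HasDerivAt.unique ?_ (hX t)
  simpa only [hT _] using (hX (t + T)).comp_add_const t T

lemma diffContOnCl_comp_mul {A : ℂ → ℂ} (hA : DifferentiableOn ℂ A (Metric.ball 0 1)) {r : ℝ}
    (hr : r ∈ Ioo (0 : ℝ) 1) : DiffContOnCl ℂ (fun u => A (r * u)) (Metric.ball 0 1) := by
  refine DifferentiableOn.diffContOnCl (hA.comp (by fun_prop) fun u hu => ?_)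
  have hu : ‖u‖ ≤ 1 := mem_closedBall_zero_iff.1 (Metric.closure_ball_subset_closedBall hu)
  rw [mem_ball_zero_iff, norm_mul, Complex.norm_real, Real.norm_of_nonneg hr.1.le]
  exact (mul_le_of_le_one_right hr.1.le hu).trans_lt hr.2

lemma integral_circleMap_eq {A : ℂ → ℂ} (hA : DiffContOnCl ℂ A (Metric.ball 0 1)) :
    ∫ t in 0..2 * Real.pi, A (circleMap 0 1 t) = 2 * Real.pi * A 0 := by
  simpa [taylorCoeff] using integral_zpow_neg_mul_circleMap one_pos hA 0

lemma differentiableOn_exteriorDeriv {Ψ : ℂ → ℂ} (hΨ : DifferentiableOn ℂ Ψ (Metric.ball 0 1)) :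
    DifferentiableOn ℂ (exteriorDeriv Ψ) (Metric.ball 0 1) :=
  hΨ.sub (differentiableOn_id.mul (hΨ.deriv Metric.isOpen_ball))

lemma hasDerivAt_inv_mul_comp_circleMap {Ψ : ℂ → ℂ} {r t : ℝ}
    (hΨ : DifferentiableAt ℂ Ψ (circleMap 0 r t)) :
    HasDerivAt (fun t => (circleMap 0 1 t)⁻¹ * Ψ (circleMap 0 r t))
      (-Complex.I * ((circleMap 0 1 t)⁻¹ * exteriorDeriv Ψ (circleMap 0 r t))) t := by
  have hne : circleMap 0 1 t ≠ 0 := circleMap_ne_center one_ne_zero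
  refine (((hasDerivAt_circleMap 0 1 t).inv hne).mul
    (hΨ.hasDerivAt.comp t (hasDerivAt_circleMap 0 r t))).congr_deriv ?_
  rw [exteriorDeriv, Function.comp_apply, Pi.inv_apply]
  field_simp
  ring

namespace IsDiskParam

variable {Ψ : ℂ → ℂ} {f f' : ℝ → ℂ} {τ : ℝ ≃o ℝ} (h : IsDiskParam Ψ f f' τ)
include h

lemma continuous : Continuous f :=
  continuous_iff_continuousAt.2 fun s => (h.hasDerivAt s).continuousAt

lemma circleMap_angle_periodic : Function.Periodic (fun s => circleMap 0 1 (τ s)) (2 * Real.pi) :=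
  fun s => by simp only [h.angle_add_two_pi, periodic_circleMap 0 1 (τ s)]

lemma eq_inv_mul (s : ℝ) : f s = (circleMap 0 1 (τ s))⁻¹ * Ψ (circleMap 0 1 (τ s)) := by
  rw [h.map_circleMap, inv_mul_cancel_left₀ (circleMap_ne_center one_ne_zero)]

lemma periodic : Function.Periodic f (2 * Real.pi) := fun s => by
  rw [h.eq_inv_mul, h.eq_inv_mul s, h.angle_add_two_pi, periodic_circleMap 0 1 (τ s)]

lemma periodic_deriv : Function.Periodic f' (2 * Real.pi) :=
  periodic_of_hasDerivAt h.hasDerivAt h.periodic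

lemma integral_comp_mul_deriv {X X' : ℝ → ℂ} (hX : ∀ t, HasDerivAt X (X' t) t)
    (hX' : Continuous X') (hper : Function.Periodic X (2 * Real.pi)) :
    ∫ s in 0..2 * Real.pi, X (τ s) * f' s
      = -∫ t in 0..2 * Real.pi, Ψ (circleMap 0 1 t) * (X' t * (circleMap 0 1 t)⁻¹) := by
  have hτ : τ (2 * Real.pi) = τ 0 + 2 * Real.pi := by simpa using h.angle_add_two_pi 0
  have hf : f (2 * Real.pi) = f 0 := by simpa using h.periodic 0
  have hinner (t : ℝ) :
      X' t * f (τ.symm t) = Ψ (circleMap 0 1 t) * (X' t * (circleMap 0 1 t)⁻¹) := by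
    rw [h.eq_inv_mul, τ.apply_symm_apply]
    ring
  have hinner_per : Function.Periodic
      (fun t => Ψ (circleMap 0 1 t) * (X' t * (circleMap 0 1 t)⁻¹)) (2 * Real.pi) := fun t => by
    simp only [periodic_circleMap 0 1 t, periodic_of_hasDerivAt hX hper t]
  rw [integral_comp_mul_deriv_eq_sub hX hX' h.hasDerivAt h.continuous_deriv, hτ, hf, hper,
    sub_self, zero_sub]
  simp only [hinner]
  rw [hinner_per.intervalIntegral_add_eq (τ 0) 0, zero_add]

/-- The residue theorem for the form `Y(u) d(Ψ u / u)`, valid although `Ψ` need not be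
differentiable on the circle. -/
lemma integral_circleMap_mul_deriv {Y : ℂ → ℂ} (hY : DiffContOnCl ℂ Y (Metric.ball 0 1)) :
    ∫ s in 0..2 * Real.pi, Y (circleMap 0 1 (τ s)) * f' s
      = -(2 * Real.pi * Complex.I) * (deriv Y 0 * Ψ 0) := by
  have hinside : ∀ r ∈ Ioo (0 : ℝ) 1, ∫ s in 0..2 * Real.pi, Y (circleMap 0 r (τ s)) * f' s
      = -(r * Complex.I) * (2 * Real.pi * (deriv Y 0 * Ψ 0)) := by
    intro r hr
    have hmem := circleMap_mem_unitBall hr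
    have hdY := hY.differentiableOn.deriv Metric.isOpen_ball
    have hderiv (t : ℝ) : HasDerivAt (fun t => Y (circleMap 0 r t))
        (deriv Y (circleMap 0 r t) * (circleMap 0 r t * Complex.I)) t :=
      (hY.differentiableOn.hasDerivAt (Metric.isOpen_ball.mem_nhds (hmem t))).comp t
        (hasDerivAt_circleMap 0 r t)
    have hcont : Continuous fun t => deriv Y (circleMap 0 r t) * (circleMap 0 r t * Complex.I) :=
      (hdY.continuousOn.comp_continuous (continuous_circleMap 0 r) hmem).mul (by fun_prop)
    rw [h.integral_comp_mul_deriv hderiv hcont fun t => by simp only [periodic_circleMap 0 r t]]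
    have hmean := integral_circleMap_eq ((diffContOnCl_comp_mul hdY hr).smul h.diffContOnCl)
    simp only [smul_eq_mul, mul_zero] at hmean
    rw [neg_mul, ← hmean, ← intervalIntegral.integral_const_mul]
    congr 2 with t
    have hne : circleMap 0 1 t ≠ 0 := circleMap_ne_center one_ne_zero
    rw [circleMap_zero_eq_mul r t]
    field_simp
  have hlim : Tendsto (fun r : ℝ => -(r * Complex.I) * (2 * Real.pi * (deriv Y 0 * Ψ 0))) (𝓝[<] 1)
      (𝓝 (-((1 : ℝ) * Complex.I) * (2 * Real.pi * (deriv Y 0 * Ψ 0)))) :=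
    ContinuousWithinAt.tendsto (by fun_prop)
  refine (tendsto_nhds_unique ((tendsto_integral_comp_circleMap_mul hY.continuousOn_ball
    τ.continuous h.continuous_deriv 0 (2 * Real.pi)).congr' ?_) hlim).trans ?_
  · filter_upwards [Ioo_mem_nhdsLT zero_lt_one] with r hr using hinside r hr
  · push_cast
    ring

lemma integral_mul_inv_mul_exteriorDeriv {X X' : ℝ → ℂ} (hX : ∀ t, HasDerivAt X (X' t) t)
    (hX' : Continuous X') (hper : Function.Periodic X (2 * Real.pi)) {r : ℝ}
    (hr : r ∈ Ioo (0 : ℝ) 1) :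
    ∫ t in 0..2 * Real.pi, X t * ((circleMap 0 1 t)⁻¹ * exteriorDeriv Ψ (circleMap 0 r t))
      = -(Complex.I * ∫ t in 0..2 * Real.pi,
          Ψ (circleMap 0 r t) * (X' t * (circleMap 0 1 t)⁻¹)) := by
  have hmem := circleMap_mem_unitBall hr
  have hne (t : ℝ) : circleMap 0 1 t ≠ 0 := circleMap_ne_center one_ne_zero
  have hderiv (t : ℝ) := hasDerivAt_inv_mul_comp_circleMap
    (h.diffContOnCl.differentiableOn.differentiableAt (Metric.isOpen_ball.mem_nhds (hmem t)))
  have hcont : Continuous fun t =>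
      -Complex.I * ((circleMap 0 1 t)⁻¹ * exteriorDeriv Ψ (circleMap 0 r t)) :=
    continuous_const.mul (((continuous_circleMap 0 1).inv₀ hne).mul
      ((differentiableOn_exteriorDeriv h.diffContOnCl.differentiableOn).continuousOn.comp_continuous
        (continuous_circleMap 0 r) hmem))
  have hparts := intervalIntegral.integral_mul_deriv_eq_deriv_mul (fun t _ => hX t)
    (fun t _ => hderiv t) (hX'.intervalIntegrable 0 (2 * Real.pi))
    (hcont.intervalIntegrable 0 (2 * Real.pi))
  have hends : circleMap 0 r (2 * Real.pi) = circleMap 0 r 0 ∧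
      circleMap 0 1 (2 * Real.pi) = circleMap 0 1 0 ∧ X (2 * Real.pi) = X 0 :=
    ⟨by simpa using periodic_circleMap 0 r 0, by simpa using periodic_circleMap 0 1 0,
      by simpa using hper 0⟩
  rw [hends.1, hends.2.1, hends.2.2, sub_self, zero_sub] at hparts
  calc ∫ t in 0..2 * Real.pi, X t * ((circleMap 0 1 t)⁻¹ * exteriorDeriv Ψ (circleMap 0 r t))
      = Complex.I * ∫ t in 0..2 * Real.pi, X t * (-Complex.I *
          ((circleMap 0 1 t)⁻¹ * exteriorDeriv Ψ (circleMap 0 r t))) := by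
        rw [← intervalIntegral.integral_const_mul]
        congr 1 with t
        linear_combination (X t * ((circleMap 0 1 t)⁻¹ * exteriorDeriv Ψ (circleMap 0 r t))) *
          Complex.I_mul_I
    _ = -(Complex.I * ∫ t in 0..2 * Real.pi,
          Ψ (circleMap 0 r t) * (X' t * (circleMap 0 1 t)⁻¹)) := by
        rw [hparts, mul_neg]
        congr 3 with t
        ring

lemma tendsto_integral_mul_inv_mul_exteriorDeriv {X X' : ℝ → ℂ}
    (hX : ∀ t, HasDerivAt X (X' t) t) (hX' : Continuous X')
    (hper : Function.Periodic X (2 * Real.pi)) :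
    Tendsto (fun r : ℝ => ∫ t in 0..2 * Real.pi,
        X t * ((circleMap 0 1 t)⁻¹ * exteriorDeriv Ψ (circleMap 0 r t)))
      (𝓝[<] 1) (𝓝 (Complex.I * ∫ s in 0..2 * Real.pi, X (τ s) * f' s)) := by
  rw [h.integral_comp_mul_deriv hX hX' hper, mul_neg]
  refine ((tendsto_integral_comp_circleMap_mul h.diffContOnCl.continuousOn_ball continuous_id
    (hX'.mul ((continuous_circleMap 0 1).inv₀ fun t => circleMap_ne_center one_ne_zero))
    0 (2 * Real.pi)).const_mul Complex.I).neg.congr' ?_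
  filter_upwards [Ioo_mem_nhdsLT zero_lt_one] with r hr
  exact (h.integral_mul_inv_mul_exteriorDeriv hX hX' hper hr).symm

end IsDiskParam

/-! ### The derivative of the exterior map on the circle -/

lemma poissonKernel_circleMap_comm (ρ θ t : ℝ) :
    poissonKernel 0 (circleMap 0 ρ θ) (circleMap 0 1 t)
      = poissonKernel 0 (circleMap 0 ρ t) (circleMap 0 1 θ) := by
  simp only [poissonKernel, sub_zero, norm_sub_sq_real, norm_circleMap_zero,
    circleMap_zero_eq_mul ρ, ← Complex.real_smul, real_inner_smul_right,
    real_inner_comm (circleMap 0 1 θ), norm_smul]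

lemma integral_poissonKernel_circleMap {ρ : ℝ} (hρ : ρ ∈ Ioo (0 : ℝ) 1) (t : ℝ) :
    ∫ θ in 0..2 * Real.pi, poissonKernel 0 (circleMap 0 ρ θ) (circleMap 0 1 t) = 2 * Real.pi := by
  have hmean := DiffContOnCl.circleAverage_poissonKernel_smul
    (diffContOnCl_const (c := (1 : ℂ))) (circleMap_mem_unitBall hρ t)
  rw [Real.circleAverage_def, inv_smul_eq_iff₀ Real.two_pi_pos.ne'] at hmean
  simp only [poissonKernel_circleMap_comm ρ _ t]
  simpa [intervalIntegral.integral_ofReal, ← Complex.ofReal_mul, Complex.ofReal_inj] using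
    congrArg Complex.re hmean

lemma poissonKernel_nonneg {a w : ℂ} (ha : ‖a‖ ≤ ‖w‖) : 0 ≤ poissonKernel 0 a w := by
  rw [poissonKernel, sub_zero, sub_zero]
  have : ‖a‖ ^ 2 ≤ ‖w‖ ^ 2 := by gcongr
  exact div_nonneg (sub_nonneg.2 this) (sq_nonneg _)

lemma continuous_poissonKernel_circleMap {ρ : ℝ} (hρ : ρ ∈ Ioo (0 : ℝ) 1) :
    Continuous fun x : ℝ × ℝ => poissonKernel 0 (circleMap 0 ρ x.1) (circleMap 0 1 x.2) := by
  have hsub (x : ℝ × ℝ) : ‖circleMap 0 1 x.2 - circleMap 0 ρ x.1‖ ^ 2 ≠ 0 := by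
    refine pow_ne_zero 2 (norm_ne_zero_iff.2 (sub_ne_zero.2 fun heq => ?_))
    have := mem_ball_zero_iff.1 (circleMap_mem_unitBall hρ x.1)
    simp [← heq] at this
  have hcircle (R : ℝ) := continuous_circleMap 0 R
  simp only [poissonKernel, sub_zero, norm_circleMap_zero]
  refine Continuous.div continuous_const ?_ hsub
  exact ((((hcircle 1).comp continuous_snd).sub ((hcircle ρ).comp continuous_fst)).norm).pow 2

namespace IsDiskParam

variable {Ψ : ℂ → ℂ} {f f' : ℝ → ℂ} {τ : ℝ ≃o ℝ} (h : IsDiskParam Ψ f f' τ)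
include h

lemma two_pi_mul_taylorCoeff_exteriorDeriv (n : ℕ) :
    2 * Real.pi * taylorCoeff (exteriorDeriv Ψ) (n + 1)
      = Complex.I * ∫ s in 0..2 * Real.pi, (circleMap 0 1 (τ s))⁻¹ ^ n * f' s := by
  have hne (t : ℝ) : circleMap 0 1 t ≠ 0 := circleMap_ne_center one_ne_zero
  have hQ := differentiableOn_exteriorDeriv h.diffContOnCl.differentiableOn
  have hderiv (t : ℝ) : HasDerivAt (fun t => (circleMap 0 1 t)⁻¹ ^ n)
      (-(n * Complex.I) * (circleMap 0 1 t)⁻¹ ^ n) t := by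
    refine (((hasDerivAt_circleMap 0 1 t).inv (hne t)).pow n).congr_deriv ?_
    rcases n with - | n
    · simp
    · have := hne t
      simp only [Pi.inv_apply, Nat.add_sub_cancel, inv_pow]
      field_simp
      ring
  have hlim := h.tendsto_integral_mul_inv_mul_exteriorDeriv hderiv
    (continuous_const.mul (((continuous_circleMap 0 1).inv₀ hne).pow n))
    fun t => by simp only [periodic_circleMap 0 1 t]
  have hcoeff : Tendsto (fun r : ℝ =>
      r ^ (n + 1) * (2 * Real.pi * taylorCoeff (exteriorDeriv Ψ) (n + 1))) (𝓝[<] 1)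
      (𝓝 ((1 : ℝ) ^ (n + 1) * (2 * Real.pi * taylorCoeff (exteriorDeriv Ψ) (n + 1)))) :=
    ContinuousWithinAt.tendsto (by fun_prop)
  rw [Complex.ofReal_one, one_pow, one_mul] at hcoeff
  refine tendsto_nhds_unique (hcoeff.congr' ?_) hlim
  filter_upwards [Ioo_mem_nhdsLT zero_lt_one] with r hr
  have hr0 : (r : ℂ) ≠ 0 := by exact_mod_cast hr.1.ne'
  rw [← integral_zpow_neg_mul_circleMap hr.1 (hQ.diffContOnCl_ball
    (Metric.closedBall_subset_ball hr.2)),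
    ← intervalIntegral.integral_const_mul]
  congr 1 with t
  rw [circleMap_zero_eq_mul r t, zpow_neg, zpow_natCast, inv_pow]
  have := hne t
  field_simp
  ring

lemma two_pi_mul_exteriorDeriv {a : ℂ} (ha : a ∈ Metric.ball (0 : ℂ) 1) :
    2 * Real.pi * exteriorDeriv Ψ a
      = Complex.I * ∫ s in 0..2 * Real.pi,
          poissonKernel 0 a (circleMap 0 1 (τ s)) * circleMap 0 1 (τ s) * f' s := by
  have hne (t : ℝ) : circleMap 0 1 t ≠ 0 := circleMap_ne_center one_ne_zero
  have hQ := differentiableOn_exteriorDeriv h.diffContOnCl.differentiableOn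
  have hX : ContDiff ℝ 1
      fun t : ℝ => (poissonKernel 0 a (circleMap 0 1 t) * circleMap 0 1 t : ℂ) := by
    have hsub (t : ℝ) : ‖circleMap 0 1 t - a‖ ^ 2 ≠ 0 := by
      refine pow_ne_zero 2 (norm_ne_zero_iff.2 (sub_ne_zero.2 fun hat => ?_))
      simp [← hat] at ha
    have hcircle : ContDiff ℝ 1 (circleMap 0 1) := (contDiff_circleMap 0 1).of_le le_top
    simp only [poissonKernel, sub_zero]
    refine (Complex.ofRealCLM.contDiff.comp ?_).mul hcircle
    exact ((hcircle.norm_sq ℂ).sub contDiff_const).div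
      ((hcircle.sub contDiff_const).norm_sq ℂ) hsub
  have hlim := h.tendsto_integral_mul_inv_mul_exteriorDeriv
    (fun t => (hX.differentiable one_ne_zero t).hasDerivAt) (hX.continuous_deriv le_rfl)
    fun t => by simp only [periodic_circleMap 0 1 t]
  have hQa : Tendsto (fun r : ℝ => 2 * Real.pi * exteriorDeriv Ψ (r * a)) (𝓝[<] 1)
      (𝓝 (2 * Real.pi * exteriorDeriv Ψ a)) := by
    have hra : Tendsto (fun r : ℝ => r * a) (𝓝[<] 1) (𝓝 a) := by
      simpa using ((Complex.continuous_ofReal.tendsto 1).mul_const a).mono_left nhdsWithin_le_nhds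
    exact ((hQ.continuousOn.continuousAt (Metric.isOpen_ball.mem_nhds ha)).tendsto.comp
      hra).const_mul _
  refine tendsto_nhds_unique (hQa.congr' ?_) hlim
  filter_upwards [Ioo_mem_nhdsLT zero_lt_one] with r hr
  have hmean := (diffContOnCl_comp_mul hQ hr).circleAverage_poissonKernel_smul ha
  rw [Real.circleAverage_def, inv_smul_eq_iff₀ Real.two_pi_pos.ne'] at hmean
  rw [Complex.real_smul, Complex.ofReal_mul, Complex.ofReal_ofNat] at hmean
  rw [← hmean]
  congr 1 with t
  rw [Pi.smul_apply', Complex.real_smul, circleMap_zero_eq_mul r t, mul_assoc,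
    mul_inv_cancel_left₀ (hne t)]

lemma norm_exteriorDeriv_le {a : ℂ} (ha : a ∈ Metric.ball (0 : ℂ) 1) :
    ‖exteriorDeriv Ψ a‖
      ≤ (2 * Real.pi)⁻¹ *
        ∫ s in 0..2 * Real.pi, poissonKernel 0 a (circleMap 0 1 (τ s)) * ‖f' s‖ := by
  have hnorm (s : ℝ) : ‖poissonKernel 0 a (circleMap 0 1 (τ s)) * circleMap 0 1 (τ s) * f' s‖
      = poissonKernel 0 a (circleMap 0 1 (τ s)) * ‖f' s‖ := by
    have hP : 0 ≤ poissonKernel 0 a (circleMap 0 1 (τ s)) :=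
      poissonKernel_nonneg (by simpa using (mem_ball_zero_iff.1 ha).le)
    simp [Complex.norm_real, Real.norm_of_nonneg hP]
  rw [inv_mul_eq_div, le_div_iff₀' Real.two_pi_pos]
  calc 2 * Real.pi * ‖exteriorDeriv Ψ a‖ = ‖2 * Real.pi * exteriorDeriv Ψ a‖ := by
        simp [abs_of_pos Real.pi_pos]
    _ = ‖∫ s in 0..2 * Real.pi,
          poissonKernel 0 a (circleMap 0 1 (τ s)) * circleMap 0 1 (τ s) * f' s‖ := by
        rw [h.two_pi_mul_exteriorDeriv ha, norm_mul, Complex.norm_I, one_mul]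
    _ ≤ _ := by
        refine (intervalIntegral.norm_integral_le_integral_norm Real.two_pi_pos.le).trans_eq ?_
        simp only [hnorm]

lemma integral_norm_exteriorDeriv_le {ρ : ℝ} (hρ : ρ ∈ Ioo (0 : ℝ) 1) :
    ∫ θ in 0..2 * Real.pi, ‖exteriorDeriv Ψ (circleMap 0 ρ θ)‖
      ≤ ∫ s in 0..2 * Real.pi, ‖f' s‖ := by
  have hQ := differentiableOn_exteriorDeriv h.diffContOnCl.differentiableOn
  have hK : Continuous (Function.uncurry fun θ s =>
      poissonKernel 0 (circleMap 0 ρ θ) (circleMap 0 1 (τ s)) * ‖f' s‖) :=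
    ((continuous_poissonKernel_circleMap hρ).comp
      (continuous_fst.prodMk (τ.continuous.comp continuous_snd))).mul
      (h.continuous_deriv.comp continuous_snd).norm
  calc ∫ θ in 0..2 * Real.pi, ‖exteriorDeriv Ψ (circleMap 0 ρ θ)‖
      ≤ ∫ θ in 0..2 * Real.pi, (2 * Real.pi)⁻¹ * ∫ s in 0..2 * Real.pi,
          poissonKernel 0 (circleMap 0 ρ θ) (circleMap 0 1 (τ s)) * ‖f' s‖ := by
        refine intervalIntegral.integral_mono_on Real.two_pi_pos.le
          ((hQ.continuousOn.comp_continuous (continuous_circleMap 0 ρ)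
            (circleMap_mem_unitBall hρ)).norm.intervalIntegrable _ _)
          (((intervalIntegral.continuous_parametric_intervalIntegral_of_continuous' hK _
            _).const_mul _).intervalIntegrable _ _)
          fun θ _ => h.norm_exteriorDeriv_le (circleMap_mem_unitBall hρ θ)
    _ = (2 * Real.pi)⁻¹ * ∫ s in 0..2 * Real.pi, ∫ θ in 0..2 * Real.pi,
          poissonKernel 0 (circleMap 0 ρ θ) (circleMap 0 1 (τ s)) * ‖f' s‖ := by
        rw [intervalIntegral.integral_const_mul, intervalIntegral_intervalIntegral_swap]
        exact (hK.continuousOn.integrableOn_compact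
          (isCompact_uIcc.prod isCompact_uIcc)).mono_set
          (prod_mono uIoc_subset_uIcc uIoc_subset_uIcc)
    _ = ∫ s in 0..2 * Real.pi, ‖f' s‖ := by
        simp only [intervalIntegral.integral_mul_const, integral_poissonKernel_circleMap hρ,
          intervalIntegral.integral_const_mul]
        rw [inv_mul_cancel_left₀ Real.two_pi_pos.ne']

lemma tendsto_integral_inv_pow_mul_deriv
    (hne : ∀ u ∈ Metric.ball (0 : ℂ) 1, exteriorDeriv Ψ u ≠ 0) :
    Tendsto (fun n : ℕ => ∫ s in 0..2 * Real.pi, (circleMap 0 1 (τ s))⁻¹ ^ n * f' s) atTop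
      (𝓝 0) := by
  have hcoeff := (tendsto_add_atTop_iff_nat 1).2 (tendsto_taylorCoeff_of_integral_norm_le
    (differentiableOn_exteriorDeriv h.diffContOnCl.differentiableOn) hne
    fun ρ h0 h1 => h.integral_norm_exteriorDeriv_le ⟨h0, h1⟩)
  have hlim := hcoeff.const_mul (-Complex.I * (2 * Real.pi))
  rw [mul_zero] at hlim
  refine hlim.congr fun n => ?_
  rw [mul_assoc, h.two_pi_mul_taylorCoeff_exteriorDeriv n, ← mul_assoc, neg_mul, Complex.I_mul_I,
    neg_neg, one_mul]

end IsDiskParam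

/-! ### Integral representation of Faber polynomials -/

lemma exists_derivative_eq {K : Type*} [Field K] [CharZero K] (R : Polynomial K) :
    ∃ S : Polynomial K, S.derivative = R := by
  induction R using Polynomial.induction_on' with
  | add p q hp hq =>
    obtain ⟨S, rfl⟩ := hp
    obtain ⟨T, rfl⟩ := hq
    exact ⟨S + T, Polynomial.derivative_add⟩
  | monomial n a =>
    refine ⟨Polynomial.monomial (n + 1) (a / (n + 1)), ?_⟩
    have : (n + 1 : K) ≠ 0 := by exact_mod_cast n.succ_ne_zero
    rw [Polynomial.derivative_monomial]
    simp [this]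

lemma integral_eval_mul_deriv_eq_zero {f f' : ℝ → ℂ} (hf : ∀ s, HasDerivAt f (f' s) s)
    (hf' : Continuous f') {a b : ℝ} (hab : f a = f b) (R : Polynomial ℂ) :
    ∫ s in a..b, R.eval (f s) * f' s = 0 := by
  obtain ⟨S, rfl⟩ := exists_derivative_eq R
  have hfc : Continuous f := continuous_iff_continuousAt.2 fun s => (hf s).continuousAt
  rw [intervalIntegral.integral_eq_sub_of_hasDerivAt
    (fun s _ => (S.hasDerivAt (f s)).comp s (hf s))
    (((Polynomial.continuous _).comp hfc).mul hf' |>.intervalIntegrable a b)]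
  simp [hab]

lemma diffContOnCl_update_of_tendsto {A : ℂ → ℂ} {s : Set ℂ} {c v : ℂ} (hs : s ∈ 𝓝 c)
    (hA : DifferentiableOn ℂ A (s \ {c})) (hAc : ContinuousOn A (closure s \ {c}))
    (hv : Tendsto A (𝓝[≠] c) (𝓝 v)) : DiffContOnCl ℂ (Function.update A c v) s where
  differentiableOn := (Complex.differentiableOn_compl_singleton_and_continuousAt_iff hs).1
    ⟨hA.congr fun _ hu => Function.update_of_ne hu.2 _ _, continuousAt_update_same.2 hv⟩
  continuousOn := continuousOn_update_iff.2
    ⟨hAc, fun _ => hv.mono_left (nhdsWithin_mono c fun _ hu => hu.2)⟩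

namespace IsDiskParam

variable {Ψ : ℂ → ℂ} {f f' : ℝ → ℂ} {τ : ℝ ≃o ℝ} {z : ℂ} (h : IsDiskParam Ψ f f' τ)
include h

lemma sub_eq_inv_mul (z : ℂ) (s : ℝ) : f s - z = (circleMap 0 1 (τ s))⁻¹ *
    (Ψ (circleMap 0 1 (τ s)) - circleMap 0 1 (τ s) * z) := by
  rw [h.eq_inv_mul, mul_sub, inv_mul_cancel_left₀ (circleMap_ne_center one_ne_zero)]

variable (hz : ∀ u ∈ Metric.closedBall (0 : ℂ) 1, Ψ u - u * z ≠ 0)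
include hz

lemma sub_ne_zero_of_forall_ne_zero (s : ℝ) : f s - z ≠ 0 := by
  rw [h.sub_eq_inv_mul]
  exact mul_ne_zero (inv_ne_zero (circleMap_ne_center one_ne_zero))
    (hz _ (circleMap_mem_closedBall 0 zero_le_one _))

lemma continuous_deriv_div_sub : Continuous fun s => f' s / (f s - z) :=
  h.continuous_deriv.div (h.continuous.sub continuous_const) (h.sub_ne_zero_of_forall_ne_zero hz)

lemma integral_circleMap_mul_deriv_div_sub {A : ℂ → ℂ}
    (hA : DiffContOnCl ℂ A (Metric.ball 0 1)) :
    ∫ s in 0..2 * Real.pi, A (circleMap 0 1 (τ s)) * (f' s / (f s - z))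
      = -(2 * Real.pi * Complex.I) * A 0 := by
  have h0 : (0 : ℂ) ∈ Metric.ball (0 : ℂ) 1 := Metric.mem_ball_self one_pos
  have hden : DiffContOnCl ℂ (fun u => Ψ u - u * z) (Metric.ball 0 1) :=
    h.diffContOnCl.sub (differentiable_id.mul_const z).diffContOnCl
  have hB : DiffContOnCl ℂ (fun u => A u * (Ψ u - u * z)⁻¹) (Metric.ball 0 1) :=
    hA.smul (hden.inv fun u hu => hz u (Metric.closure_ball_subset_closedBall hu))
  have hderiv : deriv (fun u => u * (A u * (Ψ u - u * z)⁻¹)) 0 = A 0 * (Ψ 0)⁻¹ := by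
    simpa using ((hasDerivAt_id' 0).fun_mul
      (hB.differentiableAt Metric.isOpen_ball h0).hasDerivAt).deriv
  have hres := h.integral_circleMap_mul_deriv (differentiable_id.diffContOnCl.smul hB)
  simp only [id, smul_eq_mul] at hres
  rw [hderiv, inv_mul_cancel_right₀ (by simpa using hz 0 (by simp))] at hres
  rw [← hres]
  congr 1 with s
  have := circleMap_ne_center (c := 0) (θ := τ s) one_ne_zero
  rw [h.sub_eq_inv_mul]
  field_simp

lemma integral_eval_mul_deriv_div_sub (F : Polynomial ℂ) :
    ∫ s in 0..2 * Real.pi, F.eval (f s) * (f' s / (f s - z))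
      = -(2 * Real.pi * Complex.I) * F.eval z := by
  obtain ⟨R, hR⟩ := Polynomial.X_sub_C_dvd_sub_C_eval (a := z) (p := F)
  have hsplit (s : ℝ) : F.eval (f s) * (f' s / (f s - z))
      = F.eval z * (1 * (f' s / (f s - z))) + R.eval (f s) * f' s := by
    have hs := h.sub_ne_zero_of_forall_ne_zero hz s
    have hF : F.eval (f s) - F.eval z = (f s - z) * R.eval (f s) := by
      simpa using congrArg (Polynomial.eval (f s)) hR
    field_simp
    linear_combination f' s * hF
  have hpole := h.integral_circleMap_mul_deriv_div_sub hz (diffContOnCl_const (c := (1 : ℂ)))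
  have hexact := integral_eval_mul_deriv_eq_zero h.hasDerivAt h.continuous_deriv
    (by simpa using (h.periodic 0).symm : f 0 = f (2 * Real.pi)) R
  have hfc := h.continuous
  have hf' := h.continuous_deriv
  have hw := h.continuous_deriv_div_sub hz
  simp only [hsplit]
  rw [intervalIntegral.integral_add, intervalIntegral.integral_const_mul, hpole, hexact]
  · ring
  · exact Continuous.intervalIntegrable (by fun_prop) _ _
  · exact (((Polynomial.continuous R).comp hfc).mul hf').intervalIntegrable _ _

variable {n : ℕ} {F : Polynomial ℂ}
  (hF : Tendsto (fun u => u⁻¹ ^ n - F.eval (Ψ u / u)) (𝓝[≠] 0) (𝓝 0))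
include hF

/- On the circle `q⁻¹ ^ n` is `F (f s)` plus boundary values of a function holomorphic in the disk
and vanishing at the origin, which integrates to zero. -/
lemma integral_inv_pow_mul_deriv_div_sub :
    ∫ s in 0..2 * Real.pi, (circleMap 0 1 (τ s))⁻¹ ^ n * (f' s / (f s - z))
      = -(2 * Real.pi * Complex.I) * F.eval z := by
  set E : ℂ → ℂ := Function.update (fun u => u⁻¹ ^ n - F.eval (Ψ u / u)) 0 0 with hE
  have hne {s : Set ℂ} : ∀ u ∈ s \ {0}, u ≠ 0 := fun u hu => hu.2
  have hEc : DiffContOnCl ℂ E (Metric.ball 0 1) := by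
    refine diffContOnCl_update_of_tendsto (Metric.ball_mem_nhds 0 one_pos) ?_ ?_ hF
    · exact ((differentiableOn_id.inv hne).pow n).sub (F.differentiable.comp_differentiableOn
        ((h.diffContOnCl.differentiableOn.mono sdiff_subset).div differentiableOn_id hne))
    · exact ((continuousOn_id.inv₀ hne).pow n).sub (F.continuous.comp_continuousOn
        ((h.diffContOnCl.continuousOn.mono sdiff_subset).div continuousOn_id hne))
  have hsplit (s : ℝ) : (circleMap 0 1 (τ s))⁻¹ ^ n * (f' s / (f s - z))
      = F.eval (f s) * (f' s / (f s - z)) + E (circleMap 0 1 (τ s)) * (f' s / (f s - z)) := by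
    rw [hE, Function.update_of_ne (circleMap_ne_center one_ne_zero), div_eq_inv_mul (Ψ _),
      ← h.eq_inv_mul]
    ring
  have hcircle : Continuous fun s => circleMap 0 1 (τ s) :=
    (continuous_circleMap 0 1).comp τ.continuous
  have hw := h.continuous_deriv_div_sub hz
  simp only [hsplit]
  rw [intervalIntegral.integral_add, h.integral_eval_mul_deriv_div_sub hz,
    h.integral_circleMap_mul_deriv_div_sub hz hEc, hE, Function.update_self, mul_zero, add_zero]
  · exact ((F.continuous.comp h.continuous).mul hw).intervalIntegrable _ _
  · exact ((hEc.continuousOn_ball.comp_continuous hcircle fun s =>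
      circleMap_mem_closedBall 0 zero_le_one _).mul hw).intervalIntegrable _ _

lemma integral_inv_pow_mul_im_deriv_div_sub (hn : n ≠ 0) :
    ∫ s in 0..2 * Real.pi, (circleMap 0 1 (τ s))⁻¹ ^ n * ((f' s / (f s - z)).im : ℂ)
      = -(Real.pi * F.eval z) := by
  have hpos := h.integral_circleMap_mul_deriv_div_sub hz
    (differentiable_id.pow n).diffContOnCl
  simp only [id, Pi.pow_apply, zero_pow hn, mul_zero] at hpos
  have hneg : ∫ s in 0..2 * Real.pi,
      (circleMap 0 1 (τ s))⁻¹ ^ n * (starRingEnd ℂ) (f' s / (f s - z)) = 0 := by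
    have hconj (t : ℝ) : (circleMap 0 1 t)⁻¹ = (starRingEnd ℂ) (circleMap 0 1 t) := by
      rw [conj_circleMap_zero, circleMap_zero_inv, inv_one]
    simp only [hconj, ← map_pow, ← map_mul]
    rw [intervalIntegral.intervalIntegral_conj, hpos, map_zero]
  have him (s : ℝ) : (circleMap 0 1 (τ s))⁻¹ ^ n * ((f' s / (f s - z)).im : ℂ)
      = (2 * Complex.I)⁻¹ * ((circleMap 0 1 (τ s))⁻¹ ^ n * (f' s / (f s - z))
        - (circleMap 0 1 (τ s))⁻¹ ^ n * (starRingEnd ℂ) (f' s / (f s - z))) := by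
    rw [Complex.im_eq_sub_conj, ← mul_sub, div_eq_inv_mul, mul_left_comm]
  have hq : Continuous fun s => (circleMap 0 1 (τ s))⁻¹ ^ n :=
    (((continuous_circleMap 0 1).comp τ.continuous).inv₀ fun s =>
      circleMap_ne_center one_ne_zero).pow n
  have hw := h.continuous_deriv_div_sub hz
  simp only [him]
  rw [intervalIntegral.integral_const_mul, intervalIntegral.integral_sub, hneg,
    h.integral_inv_pow_mul_deriv_div_sub hz hF]
  · have := Complex.I_ne_zero
    field_simp
    norm_num
  · exact (hq.mul hw).intervalIntegrable _ _
  · exact (hq.mul (Complex.continuous_conj.comp hw)).intervalIntegrable _ _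

end IsDiskParam

/-! ### A Riemann–Lebesgue lemma in the disk coordinate -/

lemma fourier_two_pi_eq_zpow (k : ℤ) (x : ℝ) :
    fourier k (x : AddCircle (2 * Real.pi)) = circleMap 0 1 x ^ k := by
  have : (Real.pi : ℂ) ≠ 0 := by exact_mod_cast Real.pi_ne_zero
  rw [fourier_coe_apply, circleMap_zero, Complex.ofReal_one, one_mul, ← Complex.exp_int_mul]
  push_cast
  field_simp

lemma exists_mem_span_fourier_norm_sub_lt {T : ℝ} [Fact (0 < T)] (G : C(AddCircle T, ℂ)) {ε : ℝ}
    (hε : 0 < ε) : ∃ P ∈ Submodule.span ℂ (range (fourier (T := T))), ∀ x, ‖G x - P x‖ < ε := by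
  have hG : G ∈ (Submodule.span ℂ (range (fourier (T := T)))).topologicalClosure := by
    rw [span_fourier_closure_eq_top]
    trivial
  obtain ⟨P, hP, hGP⟩ := Metric.mem_closure_iff.1 hG ε hε
  exact ⟨P, hP, fun x => (dist_eq_norm (G x) (P x)).symm.trans_lt
    ((ContinuousMap.dist_apply_le_dist x).trans_lt hGP)⟩

lemma norm_integral_mul_sub_integral_mul_le {p g k : ℝ → ℂ} {a b C : ℝ} (hp : Continuous p)
    (hp1 : ∀ t, ‖p t‖ ≤ 1) (hg : Continuous g) (hk : Continuous k)
    (hC : ∀ t ∈ uIcc a b, ‖g t - k t‖ ≤ C) :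
    ‖(∫ t in a..b, p t * g t) - ∫ t in a..b, p t * k t‖ ≤ C * |b - a| := by
  have hint {k : ℝ → ℂ} (hk : Continuous k) : IntervalIntegrable (fun t => p t * k t) volume a b :=
    (hp.mul hk).intervalIntegrable _ _
  rw [← intervalIntegral.integral_sub (hint hg) (hint hk)]
  refine intervalIntegral.norm_integral_le_of_norm_le_const fun t ht => ?_
  rw [← mul_sub, norm_mul]
  exact (mul_le_of_le_one_left (norm_nonneg _) (hp1 t)).trans (hC t (uIoc_subset_uIcc ht))

lemma tendsto_integral_mul_of_forall_approx {p : ℕ → ℝ → ℂ} {g : ℝ → ℂ} {a b : ℝ}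
    (hp : ∀ n, Continuous (p n)) (hp1 : ∀ n t, ‖p n t‖ ≤ 1) (hg : Continuous g)
    (happrox : ∀ ε > 0, ∃ k : ℝ → ℂ, Continuous k ∧ (∀ t ∈ uIcc a b, ‖g t - k t‖ ≤ ε) ∧
      Tendsto (fun n => ∫ t in a..b, p n t * k t) atTop (𝓝 0)) :
    Tendsto (fun n => ∫ t in a..b, p n t * g t) atTop (𝓝 0) := by
  refine Metric.tendsto_nhds.2 fun ε hε => ?_
  obtain ⟨k, hk, hgk, hlim⟩ := happrox (ε / 2 / (|b - a| + 1)) (by positivity)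
  filter_upwards [Metric.tendsto_nhds.1 hlim (ε / 2) (half_pos hε)] with n hn
  rw [dist_zero_right] at hn ⊢
  have hle : ε / 2 / (|b - a| + 1) * |b - a| ≤ ε / 2 := by
    rw [div_mul_eq_mul_div, div_le_iff₀ (by positivity)]
    gcongr
    linarith
  calc _ ≤ _ := norm_le_norm_add_norm_sub' _ (∫ t in a..b, p n t * k t)
    _ < ε / 2 + ε / 2 := add_lt_add_of_lt_of_le hn
        ((norm_integral_mul_sub_integral_mul_le (hp n) (hp1 n) hg hk hgk).trans hle)
    _ = ε := add_halves ε

lemma tendstoUniformlyOn_integral_mul {X : Type*} [TopologicalSpace X] {p : ℕ → ℝ → ℂ}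
    {k : X → ℝ → ℂ} {a b : ℝ} {K : Set X} (hp : ∀ n, Continuous (p n))
    (hp1 : ∀ n t, ‖p n t‖ ≤ 1) (hk : Continuous (Function.uncurry k)) (hK : IsCompact K)
    (hlim : ∀ x ∈ K, Tendsto (fun n => ∫ t in a..b, p n t * k x t) atTop (𝓝 0)) :
    TendstoUniformlyOn (fun n x => ∫ t in a..b, p n t * k x t) (fun _ => 0) atTop K := by
  have hkx (x : X) : Continuous (k x) := hk.comp (Continuous.prodMk_right x)
  rw [← tendstoLocallyUniformlyOn_iff_tendstoUniformlyOn_of_compact hK,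
    Metric.tendstoLocallyUniformlyOn_iff]
  intro ε hε x₀ hx₀
  have hnear : ∀ᶠ x in 𝓝 x₀, ∀ t ∈ uIcc a b, ‖k x t - k x₀ t‖ < ε / 2 / (|b - a| + 1) := by
    refine isCompact_uIcc.eventually_forall_of_forall_eventually fun t _ => ?_
    have hc : Continuous fun y : X × ℝ => ‖k y.1 y.2 - k x₀ y.2‖ :=
      (hk.sub ((hkx x₀).comp continuous_snd)).norm
    refine hc.continuousAt.eventually_lt continuousAt_const ?_
    rw [sub_self, norm_zero]
    positivity
  have hle : ε / 2 / (|b - a| + 1) * |b - a| ≤ ε / 2 := by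
    rw [div_mul_eq_mul_div, div_le_iff₀ (by positivity)]
    gcongr
    linarith
  refine ⟨_, mem_nhdsWithin_of_mem_nhds hnear, ?_⟩
  filter_upwards [Metric.tendsto_nhds.1 (hlim x₀ hx₀) (ε / 2) (half_pos hε)] with n hn x hx
  rw [dist_zero_right] at hn
  rw [dist_zero_left]
  calc _ ≤ _ := norm_le_norm_add_norm_sub' _ (∫ t in a..b, p n t * k x₀ t)
    _ < ε / 2 + ε / 2 := add_lt_add_of_lt_of_le hn
        ((norm_integral_mul_sub_integral_mul_le (hp n) (hp1 n) (hkx x) (hkx x₀)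
          fun t ht => (hx t ht).le).trans hle)
    _ = ε := add_halves ε

lemma continuous_circleMap_comp_inv_pow {τ : ℝ → ℝ} (hτ : Continuous τ) (n : ℕ) :
    Continuous fun s => (circleMap 0 1 (τ s))⁻¹ ^ n :=
  (((continuous_circleMap 0 1).comp hτ).inv₀ fun _ => circleMap_ne_center one_ne_zero).pow n

lemma norm_circleMap_inv_pow (n : ℕ) (t : ℝ) : ‖(circleMap 0 1 t)⁻¹ ^ n‖ = 1 := by
  simp

namespace IsDiskParam

variable {Ψ : ℂ → ℂ} {f f' : ℝ → ℂ} {τ : ℝ ≃o ℝ} (h : IsDiskParam Ψ f f' τ)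
include h

lemma angle_symm_add_two_pi (θ : ℝ) : τ.symm (θ + 2 * Real.pi) = τ.symm θ + 2 * Real.pi := by
  rw [OrderIso.symm_apply_eq, h.angle_add_two_pi, τ.apply_symm_apply]

variable (hne : ∀ u ∈ Metric.ball (0 : ℂ) 1, exteriorDeriv Ψ u ≠ 0)
include hne

lemma tendsto_integral_inv_pow_mul_fourier (k : ℤ) :
    Tendsto (fun n : ℕ => ∫ s in 0..2 * Real.pi, (circleMap 0 1 (τ s))⁻¹ ^ n *
      (f' s * fourier k (τ s : AddCircle (2 * Real.pi)))) atTop (𝓝 0) := by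
  have hlim := h.tendsto_integral_inv_pow_mul_deriv hne
  obtain ⟨j, rfl | rfl⟩ := k.eq_nat_or_neg
  · rw [← tendsto_add_atTop_iff_nat j]
    refine hlim.congr fun n => intervalIntegral.integral_congr fun s _ => ?_
    have := circleMap_ne_center (c := 0) (θ := τ s) one_ne_zero
    simp only [fourier_two_pi_eq_zpow, zpow_natCast, pow_add, inv_pow]
    field_simp
  · refine (hlim.comp (tendsto_add_atTop_nat j)).congr fun n =>
      intervalIntegral.integral_congr fun s _ => ?_
    simp only [fourier_two_pi_eq_zpow, zpow_neg, zpow_natCast, pow_add, inv_pow]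
    ring

lemma tendsto_integral_inv_pow_mul_of_mem_span_fourier {P : C(AddCircle (2 * Real.pi), ℂ)}
    (hP : P ∈ Submodule.span ℂ (range (fourier (T := 2 * Real.pi)))) :
    Tendsto (fun n : ℕ => ∫ s in 0..2 * Real.pi, (circleMap 0 1 (τ s))⁻¹ ^ n *
      (f' s * P (τ s : AddCircle (2 * Real.pi)))) atTop (𝓝 0) := by
  have hint (n : ℕ) (G : C(AddCircle (2 * Real.pi), ℂ)) : IntervalIntegrable (fun s =>
      (circleMap 0 1 (τ s))⁻¹ ^ n * (f' s * G (τ s : AddCircle (2 * Real.pi)))) volume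
      0 (2 * Real.pi) :=
    ((continuous_circleMap_comp_inv_pow τ.continuous n).mul (h.continuous_deriv.mul
      (G.continuous.comp ((AddCircle.continuous_mk' _).comp τ.continuous)))).intervalIntegrable _ _
  induction hP using Submodule.span_induction with
  | mem P hP =>
    obtain ⟨k, rfl⟩ := hP
    exact h.tendsto_integral_inv_pow_mul_fourier hne k
  | zero => simp
  | add P Q _ _ hP hQ =>
    simpa only [ContinuousMap.add_apply, mul_add, add_zero,
      intervalIntegral.integral_add (hint _ P) (hint _ Q)] using hP.add hQ
  | smul a P _ hP =>
    simpa only [ContinuousMap.smul_apply, smul_eq_mul, mul_left_comm _ a, mul_zero,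
      intervalIntegral.integral_const_mul] using hP.const_mul a

lemma tendsto_integral_inv_pow_mul (hf' : ∀ s, f' s ≠ 0) {g : ℝ → ℂ} (hg : Continuous g)
    (hper : Function.Periodic g (2 * Real.pi)) :
    Tendsto (fun n : ℕ => ∫ s in 0..2 * Real.pi, (circleMap 0 1 (τ s))⁻¹ ^ n * g s) atTop
      (𝓝 0) := by
  have : Fact (0 < 2 * Real.pi) := ⟨Real.two_pi_pos⟩
  have hquot : Function.Periodic (fun θ => g (τ.symm θ) / f' (τ.symm θ)) (2 * Real.pi) :=
    fun θ => by simp only [h.angle_symm_add_two_pi, hper (τ.symm θ), h.periodic_deriv (τ.symm θ)]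
  have hquot_cont : Continuous fun θ => g (τ.symm θ) / f' (τ.symm θ) :=
    (hg.comp τ.symm.continuous).div (h.continuous_deriv.comp τ.symm.continuous) fun θ => hf' _
  obtain ⟨M, hM⟩ : ∃ M, ∀ s ∈ uIcc 0 (2 * Real.pi), ‖f' s‖ ≤ M :=
    isCompact_uIcc.exists_bound_of_continuousOn h.continuous_deriv.continuousOn
  have hM0 : 0 ≤ M := (norm_nonneg _).trans (hM 0 left_mem_uIcc)
  refine tendsto_integral_mul_of_forall_approx
    (fun n => continuous_circleMap_comp_inv_pow τ.continuous n)
    (fun n s => (norm_circleMap_inv_pow n _).le) hg fun ε hε => ?_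
  obtain ⟨P, hP, hGP⟩ := exists_mem_span_fourier_norm_sub_lt
    ⟨hquot.lift, continuous_coinduced_dom.mpr hquot_cont⟩ (ε := ε / (M + 1)) (by positivity)
  refine ⟨fun s => f' s * P (τ s : AddCircle (2 * Real.pi)), h.continuous_deriv.mul
    (P.continuous.comp ((AddCircle.continuous_mk' _).comp τ.continuous)), fun s hs => ?_,
    h.tendsto_integral_inv_pow_mul_of_mem_span_fourier hne hP⟩
  have hgs : g s - f' s * P (τ s) = f' s * (g s / f' s - P (τ s)) := by
    rw [mul_sub, mul_div_cancel₀ _ (hf' s)]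
  have happ : ‖g s / f' s - P (τ s)‖ < ε / (M + 1) := by simpa using hGP (τ s)
  calc ‖g s - f' s * P (τ s)‖ ≤ M * (ε / (M + 1)) := by
        rw [hgs, norm_mul]
        exact mul_le_mul (hM s hs) happ.le (norm_nonneg _) hM0
    _ ≤ ε := by
        rw [mul_div_assoc', div_le_iff₀ (by positivity), mul_comm]
        gcongr
        linarith

end IsDiskParam

/-! ### The index of a loop -/

lemma hasDerivAt_integral_div_sub {f g : ℝ → ℂ} {a b : ℝ} {z : ℂ} (hf : Continuous f)
    (hg : Continuous g) (hz : z ∉ f '' uIcc a b) :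
    HasDerivAt (fun w => ∫ s in a..b, g s / (f s - w)) (∫ s in a..b, g s / (f s - z) ^ 2) z := by
  have hclosed : IsClosed (f '' uIcc a b) := (isCompact_uIcc.image hf).isClosed
  obtain ⟨δ, hδ, hball⟩ : ∃ δ > 0, ∀ s ∈ uIcc a b, 2 * δ ≤ ‖f s - z‖ := by
    obtain ⟨ε, hε, hb⟩ := Metric.isOpen_iff.1 hclosed.isOpen_compl z hz
    refine ⟨ε / 2, half_pos hε, fun s hs => ?_⟩
    by_contra! hlt
    exact hb (mem_ball_iff_norm.2 (by linarith)) (mem_image_of_mem f hs)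
  have hfar : ∀ w ∈ Metric.ball z δ, ∀ s ∈ uIcc a b, δ ≤ ‖f s - w‖ := fun w hw s hs => by
    have htri := norm_sub_le_norm_sub_add_norm_sub (f s) w z
    linarith [hball s hs, mem_ball_iff_norm.1 hw]
  have hne : ∀ w ∈ Metric.ball z δ, ∀ s ∈ uIcc a b, f s - w ≠ 0 := fun w hw s hs =>
    norm_pos_iff.1 (hδ.trans_le (hfar w hw s hs))
  have hint : ∀ w ∈ Metric.ball z δ, IntervalIntegrable (fun s => g s / (f s - w)) volume a b :=
    fun w hw => ContinuousOn.intervalIntegrable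
      (hg.continuousOn.div (hf.sub continuous_const).continuousOn (hne w hw))
  have hz : z ∈ Metric.ball z δ := Metric.mem_ball_self hδ
  refine (intervalIntegral.hasDerivAt_integral_of_dominated_loc_of_deriv_le
    (F' := fun w s => g s / (f s - w) ^ 2) (bound := fun s => ‖g s‖ / δ ^ 2)
    (Metric.ball_mem_nhds z hδ) ?_ (hint z hz) ?_ ?_ ?_ ?_).2
  · filter_upwards [Metric.ball_mem_nhds z hδ] with w hw using
      (hint w hw).aestronglyMeasurable_restrict_uIoc
  · exact (ContinuousOn.intervalIntegrable (hg.continuousOn.div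
      ((hf.sub continuous_const).pow 2).continuousOn fun s hs =>
        pow_ne_zero 2 (hne z hz s hs))).aestronglyMeasurable_restrict_uIoc
  · refine ae_of_all _ fun s hs w hw => ?_
    rw [norm_div, norm_pow]
    gcongr
    exact hfar w hw s (uIoc_subset_uIcc hs)
  · exact (hg.norm.div_const _).intervalIntegrable _ _
  · refine ae_of_all _ fun s hs w hw => ?_
    have := hne w hw s (uIoc_subset_uIcc hs)
    refine ((hasDerivAt_const w (g s)).fun_div ((hasDerivAt_id' w).const_sub (f s))
      this).congr_deriv ?_
    ring

lemma tendsto_integral_div_sub_cobounded {f g : ℝ → ℂ} {a b : ℝ} (hf : Continuous f)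
    (hg : Continuous g) :
    Tendsto (fun w => ∫ s in a..b, g s / (f s - w)) (Bornology.cobounded ℂ) (𝓝 0) := by
  obtain ⟨R, hR⟩ := isCompact_uIcc.exists_bound_of_continuousOn (hf.continuousOn (s := uIcc a b))
  have hfar : ∀ᶠ w in Bornology.cobounded ℂ, ∀ s ∈ uIcc a b, 1 ≤ ‖f s - w‖ := by
    filter_upwards [tendsto_norm_cobounded_atTop.eventually_ge_atTop (R + 1)] with w hw s hs
    linarith [norm_sub_norm_le w (f s), norm_sub_rev w (f s), hR s hs]
  have : (Bornology.cobounded ℂ).IsCountablyGenerated := by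
    rw [← comap_norm_atTop]
    infer_instance
  rw [← intervalIntegral.integral_zero (a := a) (b := b) (μ := volume)]
  refine intervalIntegral.tendsto_integral_filter_of_dominated_convergence (fun s => ‖g s‖)
    ?_ ?_ (hg.norm.intervalIntegrable _ _) (ae_of_all _ fun s _ => ?_)
  · filter_upwards [hfar] with w hw
    exact (ContinuousOn.intervalIntegrable (hg.continuousOn.div
      (hf.sub continuous_const).continuousOn fun s hs => norm_pos_iff.1
        (one_pos.trans_le (hw s hs)))).aestronglyMeasurable_restrict_uIoc
  · filter_upwards [hfar] with w hw
    refine ae_of_all _ fun s hs => ?_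
    rw [norm_div]
    exact div_le_self (norm_nonneg _) (hw s (uIoc_subset_uIcc hs))
  · have hinv : Tendsto (fun w => (f s - w)⁻¹) (Bornology.cobounded ℂ) (𝓝 0) :=
      tendsto_inv₀_cobounded.comp (tendsto_const_sub_cobounded (f s))
    simpa [div_eq_mul_inv] using hinv.const_mul (g s)

lemma integral_deriv_div_sub_sq_eq_zero {f f' : ℝ → ℂ} {a b : ℝ} {z : ℂ}
    (hf : ∀ s, HasDerivAt f (f' s) s) (hf' : Continuous f') (hab : f a = f b)
    (hz : z ∉ f '' uIcc a b) : ∫ s in a..b, f' s / (f s - z) ^ 2 = 0 := by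
  have hfc : Continuous f := continuous_iff_continuousAt.2 fun s => (hf s).continuousAt
  have hne : ∀ s ∈ uIcc a b, f s - z ≠ 0 := fun s hs h0 => hz ⟨s, hs, sub_eq_zero.1 h0⟩
  have hderiv : ∀ s ∈ uIcc a b, HasDerivAt (fun s => -(f s - z)⁻¹) (f' s / (f s - z) ^ 2) s :=
    fun s hs => (((hf s).sub_const z).fun_inv (hne s hs)).fun_neg.congr_deriv (by ring)
  rw [intervalIntegral.integral_eq_sub_of_hasDerivAt hderiv (ContinuousOn.intervalIntegrable
    (hf'.continuousOn.div ((hfc.sub continuous_const).pow 2).continuousOn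
      fun s hs => pow_ne_zero 2 (hne s hs))), hab, sub_self]

lemma integral_deriv_div_sub_eq_zero_of_mem_exteriorDomain {f f' : ℝ → ℂ} {a b : ℝ} {z : ℂ}
    (hf : ∀ s, HasDerivAt f (f' s) s) (hf' : Continuous f') (hab : f a = f b)
    (hz : z ∈ exteriorDomain (f '' uIcc a b)) : ∫ s in a..b, f' s / (f s - z) = 0 := by
  have hfc : Continuous f := continuous_iff_continuousAt.2 fun s => (hf s).continuousAt
  have hopen : IsOpen (f '' uIcc a b)ᶜ := (isCompact_uIcc.image hfc).isClosed.isOpen_compl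
  set U := connectedComponentIn (f '' uIcc a b)ᶜ z
  have hderiv : ∀ w ∈ U, HasDerivAt (fun w => ∫ s in a..b, f' s / (f s - w)) 0 w := fun w hw => by
    have hw := connectedComponentIn_subset _ _ hw
    rw [← integral_deriv_div_sub_sq_eq_zero hf hf' hab hw]
    exact hasDerivAt_integral_div_sub hfc hf' hw
  have hconst : ∀ w ∈ U, ∫ s in a..b, f' s / (f s - w) = ∫ s in a..b, f' s / (f s - z) :=
    fun w hw => hopen.connectedComponentIn.is_const_of_deriv_eq_zero
      isPreconnected_connectedComponentIn
      (fun w hw => (hderiv w hw).differentiableAt.differentiableWithinAt)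
      (fun w hw => (hderiv w hw).deriv) hw (mem_connectedComponentIn hz.1)
  have : (Bornology.cobounded ℂ ⊓ 𝓟 U).NeBot := inf_principal_neBot_iff.2 fun V hV => by
    by_contra hempty
    exact hz.2 ((Bornology.isBounded_def.2 (by rwa [compl_compl]) : Bornology.IsBounded Vᶜ).subset
      fun w hwU hwV => hempty ⟨w, hwV, hwU⟩)
  refine tendsto_nhds_unique (l := Bornology.cobounded ℂ ⊓ 𝓟 U) (tendsto_const_nhds.congr' ?_)
    ((tendsto_integral_div_sub_cobounded (a := a) (b := b) hfc hf').mono_left inf_le_left)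
  filter_upwards [mem_inf_of_right (mem_principal_self U)] with w hw using (hconst w hw).symm

/-! ### Secants of a Dini-smooth loop -/

lemma modContGlobal_nonneg (g : ℝ → ℂ) (t : ℝ) : 0 ≤ modContGlobal g t :=
  Real.sSup_nonneg (by rintro _ ⟨_, _, _, rfl⟩; exact norm_nonneg _)

lemma bddAbove_modContGlobal {g : ℝ → ℂ} (hg : Bornology.IsBounded (range g)) (t : ℝ) :
    BddAbove {d : ℝ | ∃ s₁ s₂ : ℝ, |s₁ - s₂| ≤ t ∧ d = ‖g s₁ - g s₂‖} := by
  refine ⟨Metric.diam (range g), ?_⟩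
  rintro _ ⟨s₁, s₂, -, rfl⟩
  rw [← dist_eq_norm]
  exact Metric.dist_le_diam_of_mem hg (mem_range_self s₁) (mem_range_self s₂)

lemma norm_sub_le_modContGlobal {g : ℝ → ℂ} (hg : Bornology.IsBounded (range g)) (s t : ℝ) :
    ‖g s - g t‖ ≤ modContGlobal g |s - t| :=
  le_csSup (bddAbove_modContGlobal hg _) ⟨s, t, le_rfl, rfl⟩

lemma monotone_modContGlobal {g : ℝ → ℂ} (hg : Bornology.IsBounded (range g)) :
    Monotone (modContGlobal g) := by
  refine fun a b hab => Real.sSup_le ?_ (modContGlobal_nonneg g b)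
  rintro _ ⟨s₁, s₂, h, rfl⟩
  exact (norm_sub_le_modContGlobal hg s₁ s₂).trans
    (csSup_le_csSup (bddAbove_modContGlobal hg b) ⟨_, s₁, s₂, le_rfl, rfl⟩
      fun _ ⟨t₁, t₂, ht, hd⟩ => ⟨t₁, t₂, ht.trans (h.trans hab), hd⟩)

lemma modContGlobal_neg_comp_neg (g : ℝ → ℂ) :
    modContGlobal (fun s => -g (-s)) = modContGlobal g := by
  have key : ∀ (h : ℝ → ℂ) (t : ℝ), {d : ℝ | ∃ s₁ s₂ : ℝ, |s₁ - s₂| ≤ t ∧ d = ‖h s₁ - h s₂‖} ⊆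
      {d : ℝ | ∃ s₁ s₂ : ℝ, |s₁ - s₂| ≤ t ∧ d = ‖-h (-s₁) - -h (-s₂)‖} := by
    rintro h t _ ⟨s₁, s₂, hs, rfl⟩
    refine ⟨-s₂, -s₁, ?_, ?_⟩
    · rwa [neg_sub_neg]
    · rw [neg_neg, neg_neg, neg_sub_neg]
  funext t
  refine congrArg sSup ((key g t).antisymm' ?_)
  simpa using key (fun s => -g (-s)) t

lemma exists_int_abs_sub_mul_two_pi_le (t : ℝ) :
    ∃ k : ℤ, |t - k * (2 * Real.pi)| ≤ Real.pi := by
  refine ⟨round (t / (2 * Real.pi)), ?_⟩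
  have h : t - round (t / (2 * Real.pi)) * (2 * Real.pi) =
      (t / (2 * Real.pi) - round (t / (2 * Real.pi))) * (2 * Real.pi) := by
    field_simp
  rw [h, abs_mul, abs_of_pos Real.two_pi_pos]
  linarith [mul_le_mul_of_nonneg_right (abs_sub_round (t / (2 * Real.pi))) Real.two_pi_pos.le]

/-- `f`, with derivative `f'`, is a `2π`-periodic parametrization of a Dini-smooth Jordan curve. -/
structure IsDiniSmoothLoop (f f' : ℝ → ℂ) : Prop where
  periodic : Function.Periodic f (2 * Real.pi)
  inj : ∀ s t : ℝ, f s = f t → ∃ n : ℤ, t - s = n * (2 * Real.pi)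
  hasDerivAt : ∀ s, HasDerivAt f (f' s) s
  continuous_deriv : Continuous f'
  deriv_ne_zero : ∀ s, f' s ≠ 0
  dini : IntegrableOn (fun t => modContGlobal f' t / t) (Ioc (0 : ℝ) 1)

/-- The point at signed distance `η * ‖f' s‖` from `f s` on the normal to the curve `f`. -/
def normalShift (f f' : ℝ → ℂ) (s η : ℝ) : ℂ := f s - Complex.I * η * f' s

lemma normalShift_zero (f f' : ℝ → ℂ) (s : ℝ) : normalShift f f' s 0 = f s := by
  simp [normalShift]

lemma continuous_normalShift (f f' : ℝ → ℂ) (s : ℝ) : Continuous (normalShift f f' s) := by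
  unfold normalShift
  fun_prop

lemma abs_le_norm_add_I_mul (x η : ℝ) : |x| ≤ ‖(x + Complex.I * η : ℂ)‖ := by
  simpa using Complex.abs_re_le_norm (x + Complex.I * η : ℂ)

namespace IsDiniSmoothLoop

variable {f f' : ℝ → ℂ}

lemma continuous (h : IsDiniSmoothLoop f f') : Continuous f :=
  continuous_iff_continuousAt.2 fun s => (h.hasDerivAt s).continuousAt

lemma periodic_deriv (h : IsDiniSmoothLoop f f') : Function.Periodic f' (2 * Real.pi) :=
  periodic_of_hasDerivAt h.hasDerivAt h.periodic

lemma isCompact_range_deriv (h : IsDiniSmoothLoop f f') : IsCompact (range f') :=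
  h.periodic_deriv.compact_of_continuous Real.two_pi_pos.ne' h.continuous_deriv

lemma norm_deriv_sub_le (h : IsDiniSmoothLoop f f') (s t : ℝ) :
    ‖f' s - f' t‖ ≤ modContGlobal f' |s - t| :=
  norm_sub_le_modContGlobal h.isCompact_range_deriv.isBounded s t

lemma monotone_modContGlobal_deriv (h : IsDiniSmoothLoop f f') : Monotone (modContGlobal f') :=
  monotone_modContGlobal h.isCompact_range_deriv.isBounded

lemma exists_le_norm_deriv (h : IsDiniSmoothLoop f f') : ∃ m, 0 < m ∧ ∀ s, m ≤ ‖f' s‖ := by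
  obtain ⟨_, ⟨s, rfl⟩, hs⟩ :=
    h.isCompact_range_deriv.exists_isMinOn (range_nonempty _) continuous_norm.continuousOn
  exact ⟨‖f' s‖, norm_pos_iff.2 (h.deriv_ne_zero s), fun t => hs ⟨t, rfl⟩⟩

lemma exists_norm_deriv_le (h : IsDiniSmoothLoop f f') : ∃ M, 0 < M ∧ ∀ s, ‖f' s‖ ≤ M := by
  obtain ⟨M, hM⟩ := h.isCompact_range_deriv.isBounded.exists_norm_le
  exact ⟨M, (norm_pos_iff.2 (h.deriv_ne_zero 0)).trans_le (hM _ ⟨0, rfl⟩), fun s => hM _ ⟨s, rfl⟩⟩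

lemma comp_neg (h : IsDiniSmoothLoop f f') :
    IsDiniSmoothLoop (fun s => f (-s)) fun s => -f' (-s) where
  periodic s := by simpa only [neg_add, sub_eq_add_neg] using h.periodic.sub_eq (-s)
  inj s t hst := by
    obtain ⟨n, hn⟩ := h.inj _ _ hst
    exact ⟨-n, by push_cast; linarith⟩
  hasDerivAt s := by
    simpa [Function.comp_def] using (h.hasDerivAt (-s)).scomp s (hasDerivAt_neg s)
  continuous_deriv := (h.continuous_deriv.comp continuous_neg).neg
  deriv_ne_zero s := neg_ne_zero.2 (h.deriv_ne_zero (-s))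
  dini := by simpa only [modContGlobal_neg_comp_neg] using h.dini

lemma exists_modContGlobal_deriv_lt (h : IsDiniSmoothLoop f f') {ε : ℝ} (hε : 0 < ε) :
    ∃ r, 0 < r ∧ modContGlobal f' r < ε := by
  by_contra! hle
  have hinv : IntegrableOn (fun t : ℝ => t⁻¹) (Ioc 0 1) := by
    refine (h.dini.const_mul ε⁻¹).mono' (by fun_prop) ?_
    filter_upwards [ae_restrict_mem measurableSet_Ioc] with t ht
    rw [Real.norm_of_nonneg (inv_nonneg.2 ht.1.le), ← mul_div_assoc, inv_eq_one_div]
    gcongr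
    · exact ht.1.le
    · rw [inv_mul_eq_div, one_le_div hε]
      exact hle t ht.1
  have := (intervalIntegrable_iff_integrableOn_Ioc_of_le zero_le_one).2 hinv
  simp [intervalIntegrable_inv_iff] at this

lemma norm_sub_sub_mul_deriv_le (h : IsDiniSmoothLoop f f') (s x : ℝ) :
    ‖f (s + x) - f s - x * f' s‖ ≤ modContGlobal f' |x| * |x| := by
  have hd : ∀ y : ℝ, HasDerivAt (fun y : ℝ => f (s + y) - y * f' s) (f' (s + y) - f' s) y :=
    fun y => by
      simpa using ((h.hasDerivAt (s + y)).comp_const_add s y).fun_sub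
        ((Complex.ofRealCLM.hasDerivAt (x := y)).mul_const (f' s))
  have hbound : ∀ y ∈ Icc (-|x|) |x|, ‖f' (s + y) - f' s‖ ≤ modContGlobal f' |x| := fun y hy =>
    (h.norm_deriv_sub_le _ _).trans
      (h.monotone_modContGlobal_deriv (by rw [add_sub_cancel_left]; exact abs_le.2 hy))
  have := Convex.norm_image_sub_le_of_norm_hasDerivWithin_le
    (fun y _ => (hd y).hasDerivWithinAt) hbound (convex_Icc _ _)
    (x := 0) (y := x) (abs_le.1 (by simp)) (abs_le.1 le_rfl)
  simp only [add_zero, Complex.ofReal_zero, zero_mul, sub_zero, Real.norm_eq_abs] at this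
  rwa [sub_right_comm]

lemma apply_add_ne (h : IsDiniSmoothLoop f f') (s : ℝ) {x : ℝ} (hx : x ≠ 0)
    (hxπ : |x| ≤ Real.pi) : f (s + x) ≠ f s := by
  intro heq
  obtain ⟨n, hn⟩ := h.inj _ _ heq
  have hxn : x = -(n * (2 * Real.pi)) := by linarith
  have hn0 : n ≠ 0 := by rintro rfl; simp [hxn] at hx
  have hn1 : (1 : ℝ) ≤ |(n : ℝ)| := by exact_mod_cast Int.one_le_abs hn0
  rw [hxn, abs_neg, abs_mul, abs_of_pos Real.two_pi_pos] at hxπ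
  nlinarith [Real.pi_pos]

lemma exists_le_norm_sub (h : IsDiniSmoothLoop f f') {r : ℝ} (hr : 0 < r) :
    ∃ d, 0 < d ∧ ∀ s x, r ≤ |x| → |x| ≤ Real.pi → d ≤ ‖f (s + x) - f s‖ := by
  have hK : IsCompact (Icc (-Real.pi) Real.pi ×ˢ (Icc (-Real.pi) Real.pi ∩ {x | r ≤ |x|})) :=
    isCompact_Icc.prod (isCompact_Icc.inter_right (isClosed_le continuous_const continuous_abs))
  have hf := h.continuous
  obtain ⟨d, hd, hmin⟩ := hK.exists_forall_le' (f := fun p : ℝ × ℝ => ‖f (p.1 + p.2) - f p.1‖)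
    (by fun_prop) (a := 0) fun p hp => norm_pos_iff.2 <| sub_ne_zero.2 <|
      h.apply_add_ne p.1 (abs_pos.1 (hr.trans_le hp.2.2)) (abs_le.2 hp.2.1)
  refine ⟨d, hd, fun s x hrx hxπ => ?_⟩
  obtain ⟨k, hk⟩ := exists_int_abs_sub_mul_two_pi_le s
  have := hmin (s - k * (2 * Real.pi), x) ⟨abs_le.1 hk, abs_le.1 hxπ, hrx⟩
  simpa only [sub_add_eq_add_sub, h.periodic.sub_int_mul_eq k] using this

lemma mul_abs_le_norm_sub_normalShift (h : IsDiniSmoothLoop f f') {m : ℝ} (hm : 0 ≤ m)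
    (hle : ∀ s, m ≤ ‖f' s‖) {s x η : ℝ} (hx : modContGlobal f' |x| ≤ m / 2) :
    m / 2 * |x| ≤ ‖f (s + x) - normalShift f f' s η‖ := by
  have hsplit : f (s + x) - normalShift f f' s η =
      (x + Complex.I * η) * f' s + (f (s + x) - f s - x * f' s) := by
    rw [normalShift]; ring
  have hmain : |x| * m ≤ ‖(x + Complex.I * η) * f' s‖ := by
    rw [norm_mul]
    exact mul_le_mul (abs_le_norm_add_I_mul x η) (hle s) hm (norm_nonneg _)
  have hrem := (h.norm_sub_sub_mul_deriv_le s x).trans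
    (mul_le_mul_of_nonneg_right hx (abs_nonneg x))
  rw [hsplit]
  linarith [norm_sub_le_norm_add ((x + Complex.I * η) * f' s) (f (s + x) - f s - x * f' s)]

lemma exists_mul_abs_le_norm_sub_normalShift (h : IsDiniSmoothLoop f f') :
    ∃ κ η₀, 0 < κ ∧ 0 < η₀ ∧ ∀ s x η : ℝ, |x| ≤ Real.pi → |η| ≤ η₀ →
      κ * |x| ≤ ‖f (s + x) - normalShift f f' s η‖ := by
  obtain ⟨m, hm, hle⟩ := h.exists_le_norm_deriv
  obtain ⟨M, hM, hge⟩ := h.exists_norm_deriv_le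
  obtain ⟨r, hr, hωr⟩ := h.exists_modContGlobal_deriv_lt (half_pos hm)
  obtain ⟨d, hd, hfar⟩ := h.exists_le_norm_sub hr
  refine ⟨min (m / 2) (d / (2 * Real.pi)), d / (2 * M), by positivity, by positivity,
    fun s x η hx hη => ?_⟩
  rcases le_total |x| r with hxr | hxr
  · calc _ ≤ m / 2 * |x| := by gcongr; exact min_le_left _ _
      _ ≤ _ := h.mul_abs_le_norm_sub_normalShift hm.le hle
        ((h.monotone_modContGlobal_deriv hxr).trans hωr.le)
  · have hsplit : f (s + x) - normalShift f f' s η =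
        (f (s + x) - f s) + Complex.I * η * f' s := by
      rw [normalShift]; ring
    have hshift : ‖Complex.I * η * f' s‖ ≤ d / 2 := by
      rw [norm_mul, norm_mul, Complex.norm_I, one_mul, Complex.norm_real, Real.norm_eq_abs]
      calc _ ≤ d / (2 * M) * M := by gcongr; exact hge s
        _ = d / 2 := by field_simp
    rw [hsplit]
    calc _ ≤ d / (2 * Real.pi) * Real.pi := by gcongr; exact min_le_right _ _
      _ = d / 2 := by field_simp
      _ ≤ _ := by
        linarith [norm_sub_le_norm_add (f (s + x) - f s) (Complex.I * η * f' s), hfar s x hxr hx]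

lemma exists_normalShift_notMem (h : IsDiniSmoothLoop f f') :
    ∃ η₀, 0 < η₀ ∧ ∀ s η, η ≠ 0 → |η| ≤ η₀ → normalShift f f' s η ∉ range f := by
  obtain ⟨κ, η₀, hκ, hη₀, hb⟩ := h.exists_mul_abs_le_norm_sub_normalShift
  refine ⟨η₀, hη₀, ?_⟩
  rintro s η h0 hη ⟨t, ht⟩
  obtain ⟨k, hk⟩ := exists_int_abs_sub_mul_two_pi_le (t - s)
  have hfx : f (s + (t - s - k * (2 * Real.pi))) = normalShift f f' s η := by
    rw [← ht, ← h.periodic.sub_int_mul_eq k (x := t)]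
    congr 1
    ring
  have hle := hb s _ η hk hη
  rw [hfx, sub_self, norm_zero] at hle
  have hzero : t - s - k * (2 * Real.pi) = 0 :=
    abs_eq_zero.1 ((nonpos_of_mul_nonpos_right hle hκ).antisymm (abs_nonneg _))
  rw [hzero, add_zero, normalShift, eq_comm, sub_eq_self] at hfx
  simp [h.deriv_ne_zero, h0] at hfx

lemma eventually_normalShift_notMem (h : IsDiniSmoothLoop f f') (s : ℝ) :
    ∀ᶠ η in 𝓝[≠] (0 : ℝ), normalShift f f' s η ∉ range f := by
  obtain ⟨η₀, hη₀, hn⟩ := h.exists_normalShift_notMem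
  filter_upwards [self_mem_nhdsWithin, mem_nhdsWithin_of_mem_nhds
    (Metric.closedBall_mem_nhds (0 : ℝ) hη₀)] with η hη hη'
  exact hn s η hη (by simpa using hη')

end IsDiniSmoothLoop

/-! ### The jump relation for the angular kernel -/

lemma tendsto_const_mul_nhdsGT_zero {σ : ℝ} (hσ : σ ≠ 0) :
    Tendsto (fun η => σ * η) (𝓝[>] 0) (𝓝[≠] 0) := by
  refine tendsto_nhdsWithin_iff.2 ⟨?_, ?_⟩
  · exact ((continuous_const_mul σ).tendsto' 0 0 (mul_zero σ)).mono_left nhdsWithin_le_nhds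
  · filter_upwards [self_mem_nhdsWithin] with η hη using mul_ne_zero hσ (ne_of_gt hη)

lemma tendsto_norm_mul_inv_one_add_sq_cobounded :
    Tendsto (fun x : ℝ => ‖x‖ * (Real.pi⁻¹ * (1 + x ^ 2)⁻¹)) (Bornology.cobounded ℝ) (𝓝 0) := by
  have hinv : Tendsto (fun x : ℝ => Real.pi⁻¹ * ‖x‖⁻¹) (Bornology.cobounded ℝ) (𝓝 0) := by
    simpa using (tendsto_norm_cobounded_atTop (E := ℝ)).inv_tendsto_atTop.const_mul Real.pi⁻¹
  refine squeeze_zero (fun x => by positivity) (fun x => ?_) hinv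
  rw [mul_left_comm]
  gcongr
  rcases eq_or_ne x 0 with rfl | hx
  · simp
  · have : 0 < ‖x‖ := norm_pos_iff.2 hx
    rw [← div_eq_mul_inv, div_le_iff₀ (by positivity), inv_mul_eq_div, le_div_iff₀ this, ← sq,
      Real.norm_eq_abs, sq_abs]
    linarith

lemma tendsto_integral_mul_poisson {g : ℝ → ℂ} (hg : Continuous g) {a : ℝ} (ha : 0 < a) :
    Tendsto (fun η : ℝ => ∫ x in -a..a, g x * ((η / (x ^ 2 + η ^ 2) : ℝ) : ℂ)) (𝓝[>] 0)
      (𝓝 (Real.pi * g 0)) := by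
  have hone : ∫ x : ℝ, Real.pi⁻¹ * (1 + x ^ 2)⁻¹ = 1 := by
    rw [integral_const_mul, integral_univ_inv_one_add_sq, inv_mul_cancel₀ Real.pi_ne_zero]
  have hgi : Integrable ((Ioc (-a) a).indicator g) :=
    ((hg.intervalIntegrable (-a) a).1).integrable_indicator measurableSet_Ioc
  have hgc : ContinuousAt ((Ioc (-a) a).indicator g) 0 := by
    refine hg.continuousAt.congr ?_
    filter_upwards [Ioo_mem_nhds (neg_neg_of_pos ha) ha] with x hx
    rw [indicator_of_mem (Ioo_subset_Ioc_self hx)]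
  have key := (tendsto_integral_comp_smul_smul_of_integrable (φ := fun x : ℝ =>
    Real.pi⁻¹ * (1 + x ^ 2)⁻¹) (fun x => by positivity) hone
    (by simpa using tendsto_norm_mul_inv_one_add_sq_cobounded) hgi hgc).comp
      tendsto_inv_nhdsGT_zero
  rw [indicator_of_mem (show (0 : ℝ) ∈ Ioc (-a) a from ⟨neg_neg_of_pos ha, ha.le⟩)] at key
  refine (key.const_mul (Real.pi : ℂ)).congr' ?_
  filter_upwards [self_mem_nhdsWithin] with η (hη : 0 < η)
  rw [Function.comp_apply, intervalIntegral.integral_of_le (by linarith),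
    ← integral_indicator measurableSet_Ioc, ← integral_const_mul]
  refine integral_congr_ae (Eventually.of_forall fun x => ?_)
  simp only [indicator_apply]
  split_ifs
  · have hscale : η⁻¹ * (Real.pi⁻¹ * (1 + (η⁻¹ * x) ^ 2)⁻¹) =
        Real.pi⁻¹ * (η / (x ^ 2 + η ^ 2)) := by
      field_simp
      ring
    simp only [Module.finrank_self, pow_one, smul_eq_mul, hscale, Complex.real_smul]
    push_cast
    field_simp
  · simp

lemma im_one_div_add_I_mul (x η : ℝ) :
    (1 / (x + Complex.I * η : ℂ)).im = -(η / (x ^ 2 + η ^ 2)) := by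
  rw [one_div, Complex.inv_im, Complex.normSq_apply]
  simp [sq, neg_div]

lemma intervalIntegral_eq_intervalIntegral_add_of_periodic {E : Type*} [NormedAddCommGroup E]
    [NormedSpace ℝ E] {g : ℝ → E} (hg : Function.Periodic g (2 * Real.pi)) (s : ℝ) :
    ∫ t in 0..2 * Real.pi, g t = ∫ x in -Real.pi..Real.pi, g (s + x) := by
  have hshift := hg.intervalIntegral_add_eq 0 (s + -Real.pi)
  rw [zero_add, show s + -Real.pi + 2 * Real.pi = s + Real.pi by ring] at hshift
  rw [hshift, intervalIntegral.integral_comp_add_left]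

/-- The derivative at `s + x` of the argument of `f - f s`. At `x = 0` the division by zero
gives `0`. -/
def angKernel (f f' : ℝ → ℂ) (s x : ℝ) : ℝ := (f' (s + x) / (f (s + x) - f s)).im

/-- The difference between the Cauchy kernel of the curve `f`, evaluated at a point of the normal
at `f s`, and that of the tangent line. -/
def tangentKernelSub (f f' : ℝ → ℂ) (s η x : ℝ) : ℂ :=
  f' (s + x) / (f (s + x) - normalShift f f' s η) - 1 / (x + Complex.I * η)

lemma tangentKernelSub_eq {f f' : ℝ → ℂ} {s x η : ℝ}
    (hN : f (s + x) - normalShift f f' s η ≠ 0)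
    (hE : (x + Complex.I * η : ℂ) ≠ 0) :
    tangentKernelSub f f' s η x =
      (f' (s + x) - f' s) / (f (s + x) - normalShift f f' s η) -
        (f (s + x) - f s - x * f' s) /
          ((f (s + x) - normalShift f f' s η) * (x + Complex.I * η)) := by
  have hsplit : f (s + x) - normalShift f f' s η =
      (x + Complex.I * η) * f' s + (f (s + x) - f s - x * f' s) := by
    rw [normalShift]; ring
  rw [tangentKernelSub]
  generalize f (s + x) - normalShift f f' s η = N at *
  rw [div_sub_div _ _ hN hE, div_sub_div _ _ hN (mul_ne_zero hN hE), div_eq_div_iff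
    (mul_ne_zero hN hE) (mul_ne_zero hN (mul_ne_zero hN hE))]
  linear_combination (-N * N * (x + Complex.I * η)) * hsplit

lemma im_tangentKernelSub_zero (f f' : ℝ → ℂ) (s x : ℝ) :
    (tangentKernelSub f f' s 0 x).im = angKernel f f' s x := by
  rw [tangentKernelSub, Complex.sub_im, im_one_div_add_I_mul, normalShift_zero, zero_div, neg_zero,
    sub_zero, angKernel]

namespace IsDiniSmoothLoop

variable {f f' : ℝ → ℂ}

lemma measurable_tangentKernelSub (h : IsDiniSmoothLoop f f') (s η : ℝ) :
    Measurable (tangentKernelSub f f' s η) := by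
  have hf := h.continuous.measurable
  have hf' := h.continuous_deriv.measurable
  exact ((hf'.comp (measurable_const_add s)).div
    ((hf.comp (measurable_const_add s)).sub_const _)).sub (measurable_const.div (by fun_prop))

lemma measurable_angKernel (h : IsDiniSmoothLoop f f') (s : ℝ) :
    Measurable (angKernel f f' s) := by
  rw [← funext (im_tangentKernelSub_zero f f' s)]
  exact Complex.measurable_im.comp (h.measurable_tangentKernelSub s 0)

lemma norm_tangentKernelSub_le (h : IsDiniSmoothLoop f f') {κ : ℝ} (hκ : 0 < κ) {s x η : ℝ}
    (hx : x ≠ 0) (hle : κ * |x| ≤ ‖f (s + x) - normalShift f f' s η‖) :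
    ‖tangentKernelSub f f' s η x‖ ≤ 2 / κ * (modContGlobal f' |x| / |x|) := by
  have hx' : 0 < |x| := abs_pos.2 hx
  have hE := abs_le_norm_add_I_mul x η
  have hω := modContGlobal_nonneg f' |x|
  rw [tangentKernelSub_eq (norm_pos_iff.1 ((mul_pos hκ hx').trans_le hle))
    (norm_pos_iff.1 (hx'.trans_le hE))]
  have hderiv : ‖(f' (s + x) - f' s) / (f (s + x) - normalShift f f' s η)‖ ≤
      modContGlobal f' |x| / (κ * |x|) := by
    rw [norm_div]
    gcongr
    simpa using h.norm_deriv_sub_le (s + x) s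
  have hrem : ‖(f (s + x) - f s - x * f' s) /
        ((f (s + x) - normalShift f f' s η) * (x + Complex.I * η))‖ ≤
      modContGlobal f' |x| * |x| / (κ * |x| * |x|) := by
    rw [norm_div, norm_mul]
    gcongr
    exact h.norm_sub_sub_mul_deriv_le s x
  calc _ ≤ _ := norm_sub_le _ _
    _ ≤ _ := add_le_add hderiv hrem
    _ = _ := by field_simp; norm_num

lemma intervalIntegrable_modContGlobal_div (h : IsDiniSmoothLoop f f') (a b : ℝ) :
    IntervalIntegrable (fun x => modContGlobal f' |x| / |x|) volume a b := by
  refine intervalIntegrable_of_even (fun x => by rw [abs_neg]) fun x hx => ?_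
  have hpos : IntervalIntegrable (fun t => modContGlobal f' t / t) volume 0 x := by
    refine ((intervalIntegrable_iff_integrableOn_Ioc_of_le zero_le_one).2 h.dini).trans ?_
    refine h.monotone_modContGlobal_deriv.intervalIntegrable.mul_continuousOn
      (continuousOn_inv₀.mono fun t ht => ?_)
    exact ((lt_min one_pos hx).trans_le ht.1).ne'
  refine hpos.congr fun t ht => ?_
  rw [uIoc_of_le hx.le] at ht
  rw [abs_of_pos ht.1]

lemma exists_abs_angKernel_le (h : IsDiniSmoothLoop f f') :
    ∃ C, ∀ s x, x ≠ 0 → |x| ≤ Real.pi →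
      |angKernel f f' s x| ≤ C * (modContGlobal f' |x| / |x|) := by
  obtain ⟨κ, η₀, hκ, hη₀, hb⟩ := h.exists_mul_abs_le_norm_sub_normalShift
  refine ⟨2 / κ, fun s x hx hxπ => ?_⟩
  rw [← im_tangentKernelSub_zero]
  exact (Complex.abs_im_le_norm _).trans
    (h.norm_tangentKernelSub_le hκ hx (hb s x 0 hxπ (by simpa using hη₀.le)))

lemma continuousAt_tangentKernelSub (h : IsDiniSmoothLoop f f') (s : ℝ) {x : ℝ} (hx : x ≠ 0)
    (hxπ : |x| ≤ Real.pi) : ContinuousAt (fun η => tangentKernelSub f f' s η x) 0 := by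
  refine ContinuousAt.sub ?_ (continuousAt_const.div (by fun_prop) (by simpa using hx))
  refine continuousAt_const.div
    (continuousAt_const.sub (continuous_normalShift f f' s).continuousAt) ?_
  simpa only [normalShift_zero] using sub_ne_zero.2 (h.apply_add_ne s hx hxπ)

lemma tendsto_integral_mul_tangentKernelSub (h : IsDiniSmoothLoop f f') (s : ℝ) {g : ℝ → ℂ}
    (hg : Continuous g) :
    Tendsto (fun η => ∫ x in -Real.pi..Real.pi, g x * ((tangentKernelSub f f' s η x).im : ℂ))
      (𝓝 0) (𝓝 (∫ x in -Real.pi..Real.pi, g x * angKernel f f' s x)) := by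
  obtain ⟨κ, η₀, hκ, hη₀, hb⟩ := h.exists_mul_abs_le_norm_sub_normalShift
  obtain ⟨B, hB⟩ := isCompact_Icc.exists_bound_of_continuousOn
    (s := Icc (-Real.pi) Real.pi) hg.continuousOn
  have habs : ∀ x ∈ uIoc (-Real.pi) Real.pi, |x| ≤ Real.pi := fun x hx => by
    rw [uIoc_of_le (by linarith [Real.pi_pos])] at hx
    exact abs_le.2 ⟨hx.1.le, hx.2⟩
  refine intervalIntegral.tendsto_integral_filter_of_dominated_convergence
    (fun x => B * (2 / κ * (modContGlobal f' |x| / |x|))) ?_ ?_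
    (((h.intervalIntegrable_modContGlobal_div _ _).const_mul _).const_mul _) ?_
  · exact Eventually.of_forall fun η => (hg.measurable.mul (Complex.measurable_ofReal.comp
      (Complex.measurable_im.comp (h.measurable_tangentKernelSub s η)))).aestronglyMeasurable
  · filter_upwards [Metric.closedBall_mem_nhds (0 : ℝ) hη₀] with η hη
    filter_upwards [Measure.ae_ne volume 0] with x hx hxI
    rw [mem_closedBall_zero_iff] at hη
    rw [norm_mul, Complex.norm_real]
    have hgx := hB x (abs_le.1 (habs x hxI))
    exact mul_le_mul hgx ((Complex.abs_im_le_norm _).trans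
      (h.norm_tangentKernelSub_le hκ hx (hb s x η (habs x hxI) hη))) (norm_nonneg _)
      ((norm_nonneg _).trans hgx)
  · filter_upwards [Measure.ae_ne volume 0] with x hx hxI
    rw [← im_tangentKernelSub_zero]
    exact (continuousAt_const.mul (Complex.continuous_ofReal.continuousAt.comp
      (Complex.continuous_im.continuousAt.comp
        (h.continuousAt_tangentKernelSub s hx (habs x hxI))))).tendsto

lemma continuous_deriv_div_sub (h : IsDiniSmoothLoop f f') {z : ℂ} (hz : z ∉ range f) :
    Continuous fun t => f' t / (f t - z) :=
  h.continuous_deriv.div (h.continuous.sub continuous_const)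
    fun t ht => hz ⟨t, sub_eq_zero.1 ht⟩

lemma integral_mul_im_deriv_div_sub_normalShift (h : IsDiniSmoothLoop f f') {s η : ℝ}
    (hη : η ≠ 0) (hs : normalShift f f' s η ∉ range f) {g : ℝ → ℂ} (hg : Continuous g) (a b : ℝ) :
    ∫ x in a..b, g x * ((f' (s + x) / (f (s + x) - normalShift f f' s η)).im : ℂ) =
      (∫ x in a..b, g x * ((tangentKernelSub f f' s η x).im : ℂ)) -
        ∫ x in a..b, g x * ((η / (x ^ 2 + η ^ 2) : ℝ) : ℂ) := by
  have hk := (h.continuous_deriv_div_sub hs).comp (continuous_const_add s)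
  have hline : Continuous fun x : ℝ => 1 / (x + Complex.I * η : ℂ) :=
    continuous_const.div (by fun_prop) fun x hx => hη (by simpa using congrArg Complex.im hx)
  have hpoisson : Continuous fun x : ℝ => g x * ((η / (x ^ 2 + η ^ 2) : ℝ) : ℂ) :=
    hg.mul (Complex.continuous_ofReal.comp
      (continuous_const.div (by fun_prop) fun x => by positivity))
  have hT : Continuous fun x => g x * ((tangentKernelSub f f' s η x).im : ℂ) :=
    hg.mul (Complex.continuous_ofReal.comp (Complex.continuous_im.comp (hk.sub hline)))
  rw [← intervalIntegral.integral_sub (hT.intervalIntegrable _ _)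
    (hpoisson.intervalIntegrable _ _)]
  refine intervalIntegral.integral_congr fun x _ => ?_
  simp only [tangentKernelSub, Complex.sub_im, im_one_div_add_I_mul]
  push_cast
  ring

lemma tendsto_integral_mul_im_deriv_div_sub_normalShift (h : IsDiniSmoothLoop f f') (s : ℝ)
    {g : ℝ → ℂ} (hg : Continuous g) {σ : ℝ} (hσ : |σ| = 1) :
    Tendsto (fun η : ℝ => ∫ x in -Real.pi..Real.pi, g x *
      ((f' (s + x) / (f (s + x) - normalShift f f' s (σ * η))).im : ℂ)) (𝓝[>] 0)
      (𝓝 ((∫ x in -Real.pi..Real.pi, g x * angKernel f f' s x) - σ * (Real.pi * g 0))) := by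
  have hσt := tendsto_const_mul_nhdsGT_zero (σ := σ) (by rintro rfl; simp at hσ)
  refine (((h.tendsto_integral_mul_tangentKernelSub s hg).comp
    (hσt.mono_right nhdsWithin_le_nhds)).sub
    ((tendsto_integral_mul_poisson hg Real.pi_pos).const_mul (σ : ℂ))).congr' ?_
  filter_upwards [hσt.eventually (h.eventually_normalShift_notMem s), hσt self_mem_nhdsWithin]
    with η hη hη0
  rw [h.integral_mul_im_deriv_div_sub_normalShift hη0 hη hg, Function.comp_apply,
    ← intervalIntegral.integral_const_mul]
  congr 1
  refine intervalIntegral.integral_congr fun x _ => ?_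
  simp only [mul_pow, (sq_abs σ).symm.trans (by rw [hσ, one_pow]), one_mul]
  push_cast
  ring

end IsDiniSmoothLoop

/-! ### Boundary values of Faber polynomials -/

lemma tendsto_normalShift (f f' : ℝ → ℂ) (s σ : ℝ) :
    Tendsto (fun η : ℝ => normalShift f f' s (σ * η)) (𝓝[>] 0) (𝓝 (f s)) :=
  (((continuous_normalShift f f' s).comp (continuous_const_mul σ)).tendsto' 0 (f s)
    (by simp [normalShift_zero])).mono_left nhdsWithin_le_nhds

lemma IsDiniSmoothLoop.eventually_normalShift_mul_notMem {f f' : ℝ → ℂ}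
    (h : IsDiniSmoothLoop f f') (s : ℝ) {σ : ℝ} (hσ : |σ| = 1) :
    ∀ᶠ η in 𝓝[>] (0 : ℝ), normalShift f f' s (σ * η) ∉ range f :=
  (tendsto_const_mul_nhdsGT_zero (by rintro rfl; simp at hσ)).eventually
    (h.eventually_normalShift_notMem s)

lemma IsDiniSmoothLoop.tendsto_im_integral_deriv_div_sub_normalShift {f f' : ℝ → ℂ}
    (h : IsDiniSmoothLoop f f') (s : ℝ) {σ : ℝ} (hσ : |σ| = 1) :
    Tendsto (fun η : ℝ => (∫ t in 0..2 * Real.pi,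
      f' t / (f t - normalShift f f' s (σ * η))).im) (𝓝[>] 0)
      (𝓝 ((∫ x in -Real.pi..Real.pi, angKernel f f' s x) - σ * Real.pi)) := by
  have hlim := Complex.continuous_re.continuousAt.tendsto.comp
    (h.tendsto_integral_mul_im_deriv_div_sub_normalShift s (g := fun _ => 1) continuous_const hσ)
  simp only [one_mul, mul_one, intervalIntegral.integral_ofReal, ← Complex.ofReal_mul,
    ← Complex.ofReal_sub, Complex.ofReal_re] at hlim
  refine hlim.congr' ?_
  filter_upwards [h.eventually_normalShift_mul_notMem s hσ] with η hη
  have hper : Function.Periodic (fun t => f' t / (f t - normalShift f f' s (σ * η)))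
      (2 * Real.pi) := fun t => by simp only [h.periodic t, h.periodic_deriv t]
  rw [intervalIntegral_eq_intervalIntegral_add_of_periodic hper s, Function.comp_apply,
    Complex.ofReal_re]
  exact Complex.imCLM.intervalIntegral_comp_comm
    (((h.continuous_deriv_div_sub hη).comp (continuous_const_add s)).intervalIntegrable _ _)

namespace IsDiskParam

variable {Ψ : ℂ → ℂ} {f f' : ℝ → ℂ} {τ : ℝ ≃o ℝ} (h : IsDiskParam Ψ f f' τ)
  (hf : IsDiniSmoothLoop f f')

include h

lemma integral_deriv_div_sub {z : ℂ} (hz : ∀ u ∈ Metric.closedBall (0 : ℂ) 1, Ψ u - u * z ≠ 0) :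
    ∫ s in 0..2 * Real.pi, f' s / (f s - z) = -(2 * Real.pi * Complex.I) := by
  simpa using h.integral_circleMap_mul_deriv_div_sub hz (A := fun _ => 1) diffContOnCl_const

variable (hd : ∀ z ∉ range f, (∀ u ∈ Metric.closedBall (0 : ℂ) 1, Ψ u - u * z ≠ 0) ∨
  ∫ t in 0..2 * Real.pi, f' t / (f t - z) = 0)

include hf hd

/- The index of `f` takes only the values `0` and `-1`, and it drops by one across the curve from
`η < 0` to `η > 0`. -/
lemma eventually_forall_sub_mul_normalShift_ne_zero (s : ℝ) :
    ∀ᶠ η in 𝓝[>] (0 : ℝ), ∀ u ∈ Metric.closedBall (0 : ℂ) 1,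
      Ψ u - u * normalShift f f' s (1 * η) ≠ 0 := by
  have hval : ∀ σ : ℝ, |σ| = 1 → ∀ᶠ η in 𝓝[>] (0 : ℝ), (∫ t in 0..2 * Real.pi,
      f' t / (f t - normalShift f f' s (σ * η))).im ∈ ({0, -(2 * Real.pi)} : Set ℝ) := by
    intro σ hσ
    filter_upwards [hf.eventually_normalShift_mul_notMem s hσ] with η hη
    rcases hd _ hη with hz | hz
    · simp [h.integral_deriv_div_sub hz]
    · simp [hz]
  have hlim {σ : ℝ} (hσ : |σ| = 1) := hf.tendsto_im_integral_deriv_div_sub_normalShift s hσ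
  have hclosed : IsClosed ({0, -(2 * Real.pi)} : Set ℝ) := (Set.toFinite _).isClosed
  have hpos := hclosed.mem_of_tendsto (hlim (abs_one (α := ℝ))) (hval 1 abs_one)
  have hneg := hclosed.mem_of_tendsto (hlim (σ := -1) (by simp)) (hval (-1) (by simp))
  have hne : (∫ x in -Real.pi..Real.pi, angKernel f f' s x) - 1 * Real.pi ≠ 0 := by
    simp only [mem_insert_iff, mem_singleton_iff] at hpos hneg
    rcases hpos with hpos | hpos <;> rcases hneg with hneg | hneg <;> linarith [Real.pi_pos]
  filter_upwards [(hlim (abs_one (α := ℝ))).eventually_ne hne,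
    hf.eventually_normalShift_mul_notMem s (abs_one (α := ℝ))] with η hη hη'
  exact (hd _ hη').resolve_right fun hz => hη (by rw [hz, Complex.zero_im])

lemma eval_eq_inv_pow_sub_integral_angKernel {F : Polynomial ℂ} {n : ℕ} (hn : n ≠ 0)
    (hF : Tendsto (fun u => u⁻¹ ^ n - F.eval (Ψ u / u)) (𝓝[≠] 0) (𝓝 0)) (s : ℝ) :
    F.eval (f s) = (circleMap 0 1 (τ s))⁻¹ ^ n - (Real.pi : ℂ)⁻¹ *
      ∫ x in -Real.pi..Real.pi, (circleMap 0 1 (τ (s + x)))⁻¹ ^ n * angKernel f f' s x := by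
  have hq : Continuous fun x => (circleMap 0 1 (τ (s + x)))⁻¹ ^ n :=
    continuous_circleMap_comp_inv_pow (τ.continuous.comp (continuous_const_add s)) n
  have heval := F.continuous.continuousAt.tendsto.comp (tendsto_normalShift f f' s 1)
  have hint := (hf.tendsto_integral_mul_im_deriv_div_sub_normalShift s hq abs_one).const_mul
    (-(Real.pi : ℂ)⁻¹)
  have hπ : (Real.pi : ℂ) ≠ 0 := by exact_mod_cast Real.pi_ne_zero
  refine (tendsto_nhds_unique_of_eventuallyEq heval hint ?_).trans ?_
  · filter_upwards [h.eventually_forall_sub_mul_normalShift_ne_zero hf hd s] with η hη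
    have hper : Function.Periodic (fun t => (circleMap 0 1 (τ t))⁻¹ ^ n *
        ((f' t / (f t - normalShift f f' s (1 * η))).im : ℂ)) (2 * Real.pi) := fun t => by
      simp only [h.periodic t, h.periodic_deriv t, h.circleMap_angle_periodic t]
    rw [Function.comp_apply, ← intervalIntegral_eq_intervalIntegral_add_of_periodic hper s,
      h.integral_inv_pow_mul_im_deriv_div_sub hη hF hn]
    field_simp
  · simp only [add_zero, Complex.ofReal_one, one_mul]
    field_simp
    ring

end IsDiskParam

/-! ### Truncation of the angular kernel -/

/-- The kernel `angKernel f f' s (t - s)`, made continuous by bounding the denominator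
`‖f t - f s‖ ^ 2` below by `δ ^ 2`. -/
def truncKernel (f f' : ℝ → ℂ) (δ s t : ℝ) : ℝ :=
  (f' t * starRingEnd ℂ (f t - f s)).im / max (‖f t - f s‖ ^ 2) (δ ^ 2)

lemma angKernel_eq_div_norm_sq (f f' : ℝ → ℂ) (s x : ℝ) : angKernel f f' s x =
    (f' (s + x) * starRingEnd ℂ (f (s + x) - f s)).im / ‖f (s + x) - f s‖ ^ 2 := by
  rw [angKernel, div_eq_mul_inv, Complex.inv_def, ← mul_assoc, ← Complex.normSq_eq_norm_sq,
    Complex.im_mul_ofReal, div_eq_mul_inv]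

lemma truncKernel_eq_angKernel {f f' : ℝ → ℂ} {δ s x : ℝ} (hδ : 0 ≤ δ)
    (h : δ ≤ ‖f (s + x) - f s‖) : truncKernel f f' δ s (s + x) = angKernel f f' s x := by
  rw [angKernel_eq_div_norm_sq, truncKernel, max_eq_left (by gcongr)]

lemma abs_angKernel_sub_truncKernel_le (f f' : ℝ → ℂ) (δ s x : ℝ) :
    |angKernel f f' s x - truncKernel f f' δ s (s + x)| ≤ |angKernel f f' s x| := by
  rcases eq_or_ne (f (s + x) - f s) 0 with h | h
  · simp [angKernel_eq_div_norm_sq, truncKernel, h]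
  rw [angKernel_eq_div_norm_sq, truncKernel, div_eq_mul_inv, div_eq_mul_inv, ← mul_sub, abs_mul,
    abs_mul]
  refine mul_le_mul_of_nonneg_left ?_ (abs_nonneg _)
  have hle : (max (‖f (s + x) - f s‖ ^ 2) (δ ^ 2))⁻¹ ≤ (‖f (s + x) - f s‖ ^ 2)⁻¹ := by
    gcongr
    exact le_max_left _ _
  rw [abs_of_nonneg (sub_nonneg.2 hle), abs_of_nonneg (by positivity)]
  exact sub_le_self _ (by positivity)

lemma periodic_truncKernel {f f' : ℝ → ℂ} {T : ℝ} (hf : Function.Periodic f T)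
    (hf' : Function.Periodic f' T) (δ s : ℝ) : Function.Periodic (truncKernel f f' δ s) T :=
  fun t => by simp only [truncKernel, hf t, hf' t]

lemma continuous_truncKernel {f f' : ℝ → ℂ} (hf : Continuous f) (hf' : Continuous f') {δ : ℝ}
    (hδ : 0 < δ) : Continuous (Function.uncurry (truncKernel f f' δ)) := by
  unfold Function.uncurry truncKernel
  refine Continuous.div (Complex.continuous_im.comp ((hf'.comp continuous_snd).mul
    (Complex.continuous_conj.comp (by fun_prop)))) (by fun_prop) fun p => ?_
  exact ((pow_pos hδ 2).trans_le (le_max_right _ _)).ne'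

lemma measurableSet_abs_lt (r : ℝ) : MeasurableSet {x : ℝ | |x| < r} :=
  measurableSet_lt continuous_abs.measurable measurable_const

lemma tendsto_integral_indicator_abs_lt {E : Type*} [NormedAddCommGroup E] [NormedSpace ℝ E]
    {g : ℝ → E} {a b : ℝ} (hg : IntervalIntegrable g volume a b) :
    Tendsto (fun r : ℝ => ∫ x in a..b, {x : ℝ | |x| < r}.indicator g x) (𝓝[>] 0) (𝓝 0) := by
  have hlim : ∀ᵐ x : ℝ, x ∈ uIoc a b →
      Tendsto (fun r : ℝ => {x : ℝ | |x| < r}.indicator g x) (𝓝[>] 0) (𝓝 0) := by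
    filter_upwards [Measure.ae_ne volume 0] with x hx _
    refine tendsto_const_nhds.congr' ?_
    filter_upwards [mem_nhdsWithin_of_mem_nhds (Iio_mem_nhds (abs_pos.2 hx))] with r hr
    exact (indicator_of_notMem (show x ∉ {x : ℝ | |x| < r} from not_lt.2 (mem_Iio.1 hr).le) g).symm
  simpa using intervalIntegral.tendsto_integral_filter_of_dominated_convergence (fun x => ‖g x‖)
    (Eventually.of_forall fun r =>
      hg.aestronglyMeasurable_restrict_uIoc.indicator (measurableSet_abs_lt r))
    (Eventually.of_forall fun r => Eventually.of_forall fun x _ => norm_indicator_le_norm_self _ _)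
    hg.norm hlim

namespace IsDiniSmoothLoop

variable {f f' : ℝ → ℂ}

lemma intervalIntegrable_angKernel (h : IsDiniSmoothLoop f f') (s : ℝ) :
    IntervalIntegrable (angKernel f f' s) volume (-Real.pi) Real.pi := by
  obtain ⟨C, hC⟩ := h.exists_abs_angKernel_le
  refine ((h.intervalIntegrable_modContGlobal_div _ _).const_mul C).mono_fun
    (h.measurable_angKernel s).aestronglyMeasurable ?_
  rw [Filter.EventuallyLE, ae_restrict_iff' measurableSet_uIoc]
  filter_upwards [Measure.ae_ne volume 0] with x hx hxI
  rw [uIoc_of_le (by linarith [Real.pi_pos])] at hxI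
  exact (hC s x hx (abs_le.2 ⟨hxI.1.le, hxI.2⟩)).trans (le_abs_self _)

lemma exists_abs_angKernel_sub_truncKernel_le (h : IsDiniSmoothLoop f f') :
    ∃ C κ, 0 < κ ∧ ∀ r s x, 0 ≤ r → x ≠ 0 → |x| ≤ Real.pi →
      |angKernel f f' s x - truncKernel f f' (κ * r) s (s + x)| ≤
        {x : ℝ | |x| < r}.indicator (fun x => C * (modContGlobal f' |x| / |x|)) x := by
  obtain ⟨κ, η₀, hκ, hη₀, hb⟩ := h.exists_mul_abs_le_norm_sub_normalShift
  obtain ⟨C, hC⟩ := h.exists_abs_angKernel_le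
  refine ⟨C, κ, hκ, fun r s x hr hx hxπ => ?_⟩
  by_cases hxr : |x| < r
  · rw [indicator_of_mem (show x ∈ {x : ℝ | |x| < r} from hxr)]
    exact (abs_angKernel_sub_truncKernel_le f f' _ s x).trans (hC s x hx hxπ)
  · have hle : κ * r ≤ ‖f (s + x) - f s‖ := by
      refine (mul_le_mul_of_nonneg_left (not_lt.1 hxr) hκ.le).trans ?_
      simpa only [normalShift_zero] using hb s x 0 hxπ (by simpa using hη₀.le)
    rw [indicator_of_notMem (show x ∉ {x : ℝ | |x| < r} from hxr),
      truncKernel_eq_angKernel (by positivity) hle, sub_self, abs_zero]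

lemma exists_norm_integral_mul_angKernel_sub_lt (h : IsDiniSmoothLoop f f') {ε : ℝ}
    (hε : 0 < ε) : ∃ δ, 0 < δ ∧ ∀ (s : ℝ) (p : ℝ → ℂ), Continuous p → (∀ x, ‖p x‖ ≤ 1) →
      ‖(∫ x in -Real.pi..Real.pi, p x * angKernel f f' s x) -
        ∫ x in -Real.pi..Real.pi, p x * truncKernel f f' δ s (s + x)‖ < ε := by
  obtain ⟨C, κ, hκ, hle⟩ := h.exists_abs_angKernel_sub_truncKernel_le
  have hω := (h.intervalIntegrable_modContGlobal_div (-Real.pi) Real.pi).const_mul C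
  obtain ⟨r, hr, hr0 : 0 < r⟩ := (((tendsto_integral_indicator_abs_lt hω).eventually_lt_const
    hε).and self_mem_nhdsWithin).exists
  refine ⟨κ * r, mul_pos hκ hr0, fun s p hp hp1 => ?_⟩
  have hang : IntervalIntegrable (fun x => (angKernel f f' s x : ℂ)) volume (-Real.pi) Real.pi :=
    intervalIntegrable_iff.2 (intervalIntegrable_iff.1 (h.intervalIntegrable_angKernel s)).ofReal
  have htrunc : Continuous fun x => p x * truncKernel f f' (κ * r) s (s + x) :=
    hp.mul (Complex.continuous_ofReal.comp
      ((continuous_truncKernel h.continuous h.continuous_deriv (mul_pos hκ hr0)).comp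
        (by fun_prop : Continuous fun x : ℝ => (s, s + x))))
  rw [← intervalIntegral.integral_sub (hang.continuousOn_mul hp.continuousOn)
    (htrunc.intervalIntegrable _ _)]
  refine (intervalIntegral.norm_integral_le_of_norm_le (by linarith [Real.pi_pos]) ?_ ?_).trans_lt
    hr
  · filter_upwards [Measure.ae_ne volume 0] with x hx hxI
    rw [← mul_sub, norm_mul, ← Complex.ofReal_sub, Complex.norm_real, Real.norm_eq_abs]
    exact (mul_le_of_le_one_left (abs_nonneg _) (hp1 x)).trans
      (hle r s x hr0.le hx (abs_le.2 ⟨hxI.1.le, hxI.2⟩))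
  · rw [intervalIntegrable_iff] at hω ⊢
    exact hω.indicator (measurableSet_abs_lt r)

end IsDiniSmoothLoop

namespace IsDiskParam

variable {Ψ : ℂ → ℂ} {f f' : ℝ → ℂ} {τ : ℝ ≃o ℝ} (h : IsDiskParam Ψ f f' τ)
  (hf : IsDiniSmoothLoop f f') (hne : ∀ u ∈ Metric.ball (0 : ℂ) 1, exteriorDeriv Ψ u ≠ 0)

include h hf hne

lemma tendstoUniformlyOn_integral_inv_pow_mul_truncKernel {δ : ℝ} (hδ : 0 < δ) {K : Set ℝ}
    (hK : IsCompact K) :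
    TendstoUniformlyOn (fun (n : ℕ) s => ∫ x in -Real.pi..Real.pi,
      (circleMap 0 1 (τ (s + x)))⁻¹ ^ n * truncKernel f f' δ s (s + x)) (fun _ => 0) atTop K := by
  have hcont : Continuous (Function.uncurry fun s t => (truncKernel f f' δ s t : ℂ)) :=
    Complex.continuous_ofReal.comp (continuous_truncKernel h.continuous h.continuous_deriv hδ)
  have hper (s : ℝ) := periodic_truncKernel h.periodic h.periodic_deriv δ s
  refine (tendstoUniformlyOn_integral_mul (a := 0) (b := 2 * Real.pi)
    (p := fun n t => (circleMap 0 1 (τ t))⁻¹ ^ n)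
    (fun n => continuous_circleMap_comp_inv_pow τ.continuous n)
    (fun n t => (norm_circleMap_inv_pow n (τ t)).le) hcont hK fun s _ =>
      h.tendsto_integral_inv_pow_mul hne hf.deriv_ne_zero (hcont.comp (.prodMk_right s))
        fun t => by simp only [hper s t]).congr (Eventually.of_forall fun n s _ => ?_)
  exact intervalIntegral_eq_intervalIntegral_add_of_periodic
    (fun t => by simp only [h.circleMap_angle_periodic t, hper s t]) s

lemma tendstoUniformlyOn_integral_inv_pow_mul_angKernel {K : Set ℝ} (hK : IsCompact K) :
    TendstoUniformlyOn (fun (n : ℕ) s => ∫ x in -Real.pi..Real.pi,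
      (circleMap 0 1 (τ (s + x)))⁻¹ ^ n * angKernel f f' s x) (fun _ => 0) atTop K := by
  rw [Metric.tendstoUniformlyOn_iff]
  intro ε hε
  obtain ⟨δ, hδ, hsub⟩ := hf.exists_norm_integral_mul_angKernel_sub_lt (half_pos hε)
  filter_upwards [Metric.tendstoUniformlyOn_iff.1
    (h.tendstoUniformlyOn_integral_inv_pow_mul_truncKernel hf hne hδ hK) (ε / 2) (half_pos hε)]
    with n hn s hs
  have htrunc := hn s hs
  rw [dist_zero_left] at htrunc ⊢
  calc _ ≤ _ := norm_le_norm_add_norm_sub' _ _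
    _ < ε / 2 + ε / 2 := add_lt_add htrunc (hsub s (fun x => (circleMap 0 1 (τ (s + x)))⁻¹ ^ n)
      (continuous_circleMap_comp_inv_pow (τ.continuous.comp (continuous_const_add s)) n)
      fun x => (norm_circleMap_inv_pow n _).le)
    _ = ε := add_halves ε

variable (hd : ∀ z ∉ range f, (∀ u ∈ Metric.closedBall (0 : ℂ) 1, Ψ u - u * z ≠ 0) ∨
  ∫ t in 0..2 * Real.pi, f' t / (f t - z) = 0)

include hd

lemma tendstoUniformly_eval_sub_inv_pow {F : ℕ → Polynomial ℂ}
    (hF : ∀ n, Tendsto (fun u => u⁻¹ ^ n - (F n).eval (Ψ u / u)) (𝓝[≠] 0) (𝓝 0)) :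
    TendstoUniformly (fun n s => (F n).eval (f s) - (circleMap 0 1 (τ s))⁻¹ ^ n) (fun _ => 0)
      atTop := by
  rw [Metric.tendstoUniformly_iff]
  intro ε hε
  filter_upwards [eventually_ne_atTop 0, Metric.tendstoUniformlyOn_iff.1
    (h.tendstoUniformlyOn_integral_inv_pow_mul_angKernel hf hne
      (isCompact_Icc (a := 0) (b := 2 * Real.pi))) (Real.pi * ε) (by positivity)] with n hn0 hn s
  have hper : Function.Periodic (fun s => (F n).eval (f s) - (circleMap 0 1 (τ s))⁻¹ ^ n)
      (2 * Real.pi) := fun t => by simp only [h.periodic t, h.circleMap_angle_periodic t]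
  obtain ⟨t, ht, hst⟩ := hper.exists_mem_Ico₀ Real.two_pi_pos s
  have hnt := hn t (Ico_subset_Icc_self ht)
  rw [dist_zero_left] at hnt ⊢
  rwa [hst, h.eval_eq_inv_pow_sub_integral_angKernel hf hd hn0 (hF n), sub_sub_cancel_left,
    norm_neg, norm_mul, norm_inv, Complex.norm_real, Real.norm_of_nonneg Real.pi_pos.le,
    inv_mul_lt_iff₀ Real.pi_pos]

end IsDiskParam

/-! ### The exterior conformal map in disk coordinates -/

lemma eventually_deriv_ne_zero_of_injOn {φ : ℂ → ℂ} {Ω : Set ℂ} (hΩ : IsOpen Ω)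
    (hφ : DifferentiableOn ℂ φ Ω) (hinj : InjOn φ Ω) {z : ℂ} (hz : z ∈ Ω) :
    ∀ᶠ x in 𝓝[≠] z, deriv φ x ≠ 0 := by
  refine ((hφ.deriv hΩ).analyticAt
    (hΩ.mem_nhds hz)).eventually_eq_zero_or_eventually_ne_zero.resolve_left fun h0 => ?_
  obtain ⟨r, hr, hball⟩ := Metric.eventually_nhds_iff_ball.1 (h0.and (hΩ.mem_nhds hz))
  have hmem : z + (r / 2 : ℝ) ∈ Metric.ball z r := by
    simpa [abs_of_pos hr] using hr
  have hconst : φ z = φ (z + (r / 2 : ℝ)) :=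
    Metric.isOpen_ball.is_const_of_deriv_eq_zero (convex_ball z r).isPreconnected
      (hφ.mono fun x hx => (hball x hx).2) (fun x hx => (hball x hx).1)
      (Metric.mem_ball_self hr) hmem
  simpa [hr.ne'] using hinj hz (hball _ hmem).2 hconst

lemma differentiableOn_of_continuousOn_of_rightInvOn {φ ψ : ℂ → ℂ} {Ω V : Set ℂ} (hΩ : IsOpen Ω)
    (hV : IsOpen V) (hφ : DifferentiableOn ℂ φ Ω) (hinj : InjOn φ Ω) (hψ : ContinuousOn ψ V)
    (hmaps : MapsTo ψ V Ω) (hinv : RightInvOn ψ φ V) : DifferentiableOn ℂ ψ V := by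
  intro w hw
  have hcont (v : ℂ) (hv : v ∈ V) : ContinuousAt ψ v := hψ.continuousAt (hV.mem_nhds hv)
  have hV' : ∀ᶠ v in 𝓝[≠] w, v ∈ V := mem_nhdsWithin_of_mem_nhds (hV.mem_nhds hw)
  have htend : Tendsto ψ (𝓝[≠] w) (𝓝[≠] (ψ w)) := by
    refine tendsto_nhdsWithin_iff.2 ⟨(hcont w hw).tendsto.mono_left nhdsWithin_le_nhds, ?_⟩
    filter_upwards [self_mem_nhdsWithin, hV'] with v hvw hv heq
    exact hvw (hinv.injOn hv hw heq)
  refine (Complex.analyticAt_of_differentiable_on_punctured_nhds_of_continuousAt ?_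
    (hcont w hw)).differentiableAt.differentiableWithinAt
  filter_upwards [htend.eventually (eventually_deriv_ne_zero_of_injOn hΩ hφ hinj (hmaps hw)), hV']
    with v hne hv
  exact (HasDerivAt.of_local_left_inverse (hcont v hv)
    (hφ.differentiableAt (hΩ.mem_nhds (hmaps hv))).hasDerivAt hne
    (eventually_of_mem (hV.mem_nhds hv) hinv)).differentiableAt

lemma deriv_ne_zero_of_eventually_leftInverse {φ ψ : ℂ → ℂ} {w : ℂ}
    (hφ : DifferentiableAt ℂ φ (ψ w)) (hψ : DifferentiableAt ℂ ψ w)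
    (hinv : ∀ᶠ v in 𝓝 w, φ (ψ v) = v) : deriv ψ w ≠ 0 := by
  intro h0
  have hcomp := hφ.hasDerivAt.comp w hψ.hasDerivAt
  rw [h0, mul_zero] at hcomp
  exact zero_ne_one (hcomp.unique ((hasDerivAt_id w).congr_of_eventuallyEq hinv))

lemma connectedComponentIn_subset_exteriorDomain {Γ : Set ℂ} {z : ℂ}
    (hz : z ∈ exteriorDomain Γ) : connectedComponentIn Γᶜ z ⊆ exteriorDomain Γ := fun y hy =>
  ⟨connectedComponentIn_subset _ _ hy, by rw [← connectedComponentIn_eq hy]; exact hz.2⟩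

lemma isOpen_exteriorDomain {Γ : Set ℂ} (hΓ : IsClosed Γ) : IsOpen (exteriorDomain Γ) :=
  isOpen_iff_mem_nhds.2 fun _ hz => mem_of_superset
    (hΓ.isOpen_compl.connectedComponentIn.mem_nhds (mem_connectedComponentIn hz.1))
    (connectedComponentIn_subset_exteriorDomain hz)

lemma isClosed_exteriorDomain_union {Γ : Set ℂ} (hΓ : IsClosed Γ) :
    IsClosed (exteriorDomain Γ ∪ Γ) := by
  rw [← isOpen_compl_iff, isOpen_iff_mem_nhds]
  intro z hz
  have hzΓ : z ∈ Γᶜ := fun h => hz (Or.inr h)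
  refine mem_of_superset
    (hΓ.isOpen_compl.connectedComponentIn.mem_nhds (mem_connectedComponentIn hzΓ)) fun y hy => ?_
  rintro (h | h)
  · exact hz (Or.inl ⟨hzΓ, by rw [connectedComponentIn_eq hy]; exact h.2⟩)
  · exact connectedComponentIn_subset _ _ hy h

lemma isOpen_one_lt_norm : IsOpen {w : ℂ | 1 < ‖w‖} := isOpen_lt continuous_const continuous_norm

lemma eventually_cobounded_lt_norm (r : ℝ) : ∀ᶠ w in Bornology.cobounded ℂ, r < ‖w‖ :=
  tendsto_norm_cobounded_atTop.eventually_gt_atTop r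

lemma one_le_norm_inv {u : ℂ} (hu : u ∈ Metric.closedBall (0 : ℂ) 1) (h0 : u ≠ 0) :
    1 ≤ ‖u⁻¹‖ := by
  rw [norm_inv]
  exact (one_le_inv₀ (norm_pos_iff.2 h0)).2 (mem_closedBall_zero_iff.1 hu)

lemma one_lt_norm_inv {u : ℂ} (hu : u ∈ Metric.ball (0 : ℂ) 1) (h0 : u ≠ 0) : 1 < ‖u⁻¹‖ := by
  rw [norm_inv]
  exact (one_lt_inv₀ (norm_pos_iff.2 h0)).2 (mem_ball_zero_iff.1 hu)

/-- The exterior parametrization `ψ` in the coordinate `u = w⁻¹`, multiplied by `u` to cancel its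
pole at `w = ∞`; its value at `u = 0` is the limit `c` of `ψ w / w`. -/
def diskParamOf (ψ : ℂ → ℂ) (c : ℝ) (u : ℂ) : ℂ := if u = 0 then c else u * ψ u⁻¹

lemma diskParamOf_zero (ψ : ℂ → ℂ) (c : ℝ) : diskParamOf ψ c 0 = c := if_pos rfl

lemma diskParamOf_of_ne (ψ : ℂ → ℂ) (c : ℝ) {u : ℂ} (hu : u ≠ 0) :
    diskParamOf ψ c u = u * ψ u⁻¹ := if_neg hu

lemma diskParamOf_div (ψ : ℂ → ℂ) (c : ℝ) {u : ℂ} (hu : u ≠ 0) :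
    diskParamOf ψ c u / u = ψ u⁻¹ := by
  rw [diskParamOf_of_ne ψ c hu, mul_div_cancel_left₀ _ hu]

lemma hasDerivAt_diskParamOf {ψ : ℂ → ℂ} (c : ℝ) {u : ℂ} (hψ : DifferentiableAt ℂ ψ u⁻¹)
    (hu : u ≠ 0) : HasDerivAt (diskParamOf ψ c) (ψ u⁻¹ - u⁻¹ * deriv ψ u⁻¹) u := by
  have h := (hasDerivAt_id' u).fun_mul (hψ.hasDerivAt.comp u (hasDerivAt_inv hu))
  refine (h.congr_deriv ?_).congr_of_eventuallyEq ?_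
  · rw [Function.comp_apply]
    field_simp
    ring
  · filter_upwards [isOpen_ne.mem_nhds hu] with v hv using diskParamOf_of_ne ψ c hv

lemma continuousAt_diskParamOf_zero {ψ : ℂ → ℂ} {c : ℝ}
    (hψ : Tendsto (fun w => ψ w / w) (Bornology.cobounded ℂ) (𝓝 c)) :
    ContinuousAt (diskParamOf ψ c) 0 := by
  rw [continuousAt_iff_punctured_nhds, diskParamOf_zero]
  refine (hψ.comp tendsto_inv₀_nhdsNE_zero).congr' ?_
  filter_upwards [self_mem_nhdsWithin] with u hu
  rw [Function.comp_apply, diskParamOf_of_ne ψ c hu, div_inv_eq_mul, mul_comm]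

lemma continuousOn_diskParamOf {ψ : ℂ → ℂ} {c : ℝ} (hψ : ContinuousOn ψ {w : ℂ | 1 ≤ ‖w‖})
    (hlim : Tendsto (fun w => ψ w / w) (Bornology.cobounded ℂ) (𝓝 c)) :
    ContinuousOn (diskParamOf ψ c) (Metric.closedBall 0 1) := by
  intro u hu
  rcases eq_or_ne u 0 with rfl | hu0
  · exact (continuousAt_diskParamOf_zero hlim).continuousWithinAt
  have hcont : ContinuousWithinAt (fun v => v * ψ v⁻¹) (Metric.closedBall 0 1 \ {0}) u :=
    continuousWithinAt_id.mul ((hψ u⁻¹ (one_le_norm_inv hu hu0)).comp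
      (continuousAt_inv₀ hu0).continuousWithinAt fun v hv => one_le_norm_inv hv.1 hv.2)
  exact (hcont.congr (fun v hv => diskParamOf_of_ne ψ c hv.2)
    (diskParamOf_of_ne ψ c hu0)).mono_of_mem_nhdsWithin
      (inter_mem self_mem_nhdsWithin (mem_nhdsWithin_of_mem_nhds (isOpen_ne.mem_nhds hu0)))

lemma diffContOnCl_diskParamOf {ψ : ℂ → ℂ} {c : ℝ} (hψ : ContinuousOn ψ {w : ℂ | 1 ≤ ‖w‖})
    (hd : DifferentiableOn ℂ ψ {w : ℂ | 1 < ‖w‖})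
    (hlim : Tendsto (fun w => ψ w / w) (Bornology.cobounded ℂ) (𝓝 c)) :
    DiffContOnCl ℂ (diskParamOf ψ c) (Metric.ball 0 1) := by
  refine ⟨?_, (closure_ball (0 : ℂ) one_ne_zero).symm ▸ continuousOn_diskParamOf hψ hlim⟩
  rw [← Complex.differentiableOn_compl_singleton_and_continuousAt_iff
    (Metric.ball_mem_nhds (0 : ℂ) one_pos)]
  refine ⟨fun u hu => ?_, continuousAt_diskParamOf_zero hlim⟩
  have hψu := hd.differentiableAt (isOpen_one_lt_norm.mem_nhds (one_lt_norm_inv hu.1 hu.2))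
  exact (hasDerivAt_diskParamOf c hψu hu.2).differentiableAt.differentiableWithinAt

lemma exteriorDeriv_diskParamOf {ψ : ℂ → ℂ} (c : ℝ) {u : ℂ} (hψ : DifferentiableAt ℂ ψ u⁻¹)
    (hu : u ≠ 0) : exteriorDeriv (diskParamOf ψ c) u = deriv ψ u⁻¹ := by
  rw [exteriorDeriv, (hasDerivAt_diskParamOf c hψ hu).deriv, diskParamOf_of_ne ψ c hu, ← mul_sub,
    sub_sub_cancel, mul_inv_cancel_left₀ hu]

namespace IsExteriorParam

variable {Γ : Set ℂ} {φ ψ : ℂ → ℂ} {c : ℝ} (hψ : IsExteriorParam Γ φ ψ)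
include hψ

lemma differentiableOn (hΓ : IsClosed Γ) (hφ : IsExteriorMap Γ φ c) :
    DifferentiableOn ℂ ψ {w : ℂ | 1 < ‖w‖} :=
  differentiableOn_of_continuousOn_of_rightInvOn (isOpen_exteriorDomain hΓ) isOpen_one_lt_norm
    hφ.diff hφ.bij.injOn (hψ.cont.mono fun w (hw : 1 < ‖w‖) => hw.le)
    (fun w hw => (hψ.inv w hw).1) fun w hw => (hψ.inv w hw).2

lemma exteriorDeriv_diskParamOf_ne_zero (hΓ : IsClosed Γ) (hφ : IsExteriorMap Γ φ c) {u : ℂ}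
    (hu : u ∈ Metric.ball (0 : ℂ) 1) : exteriorDeriv (diskParamOf ψ c) u ≠ 0 := by
  rcases eq_or_ne u 0 with rfl | hu0
  · simp [exteriorDeriv, diskParamOf_zero, hφ.cpos.ne']
  have hmem := isOpen_one_lt_norm.mem_nhds (one_lt_norm_inv hu hu0)
  have hψu := (hψ.differentiableOn hΓ hφ).differentiableAt hmem
  rw [exteriorDeriv_diskParamOf c hψu hu0]
  refine deriv_ne_zero_of_eventually_leftInverse (hφ.diff.differentiableAt ?_) hψu
    (eventually_of_mem hmem fun v hv => (hψ.inv v hv).2)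
  exact (isOpen_exteriorDomain hΓ).mem_nhds (hψ.inv _ (one_lt_norm_inv hu hu0)).1

lemma diskParamOf_sub_mul_ne_zero (hc : c ≠ 0) {z : ℂ} (hz : z ∉ exteriorDomain Γ ∪ Γ) {u : ℂ}
    (hu : u ∈ Metric.closedBall (0 : ℂ) 1) : diskParamOf ψ c u - u * z ≠ 0 := by
  intro h0
  rcases eq_or_ne u 0 with rfl | hu0
  · simp [diskParamOf_zero, hc] at h0
  rw [sub_eq_zero, mul_comm, ← div_eq_iff hu0, diskParamOf_div ψ c hu0] at h0
  rcases (one_le_norm_inv hu hu0).lt_or_eq with h1 | h1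
  · exact hz (Or.inl (h0 ▸ (hψ.inv _ h1).1))
  · exact hz (Or.inr (h0 ▸ hψ.boundary _ h1.symm))

variable {φb : ℂ → ℂ} (hΓ : IsClosed Γ) (hφb_eq : ∀ z ∈ exteriorDomain Γ, φb z = φ z)
  (hφb_cont : ContinuousOn φb (exteriorDomain Γ ∪ Γ))
include hΓ hφb_eq hφb_cont

lemma tendsto_cobounded :
    Tendsto ψ (Bornology.cobounded ℂ) (Bornology.cobounded ℂ ⊓ 𝓟 (exteriorDomain Γ)) := by
  refine tendsto_inf.2 ⟨?_, tendsto_principal.2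
    ((eventually_cobounded_lt_norm 1).mono fun w hw => (hψ.inv w hw).1)⟩
  rw [← tendsto_norm_atTop_iff_cobounded, tendsto_atTop]
  intro R
  have hK : IsCompact ((exteriorDomain Γ ∪ Γ) ∩ Metric.closedBall 0 R) :=
    (isCompact_closedBall _ _).inter_left (isClosed_exteriorDomain_union hΓ)
  obtain ⟨M, hM⟩ := hK.exists_bound_of_continuousOn (hφb_cont.mono inter_subset_left)
  filter_upwards [eventually_cobounded_lt_norm M, eventually_cobounded_lt_norm 1] with w hwM hw1
  obtain ⟨hψw, hφψ⟩ := hψ.inv w hw1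
  by_contra! hlt
  have hle := hM (ψ w) ⟨Or.inl hψw, mem_closedBall_zero_iff.2 hlt.le⟩
  rw [hφb_eq _ hψw, hφψ] at hle
  exact hle.not_gt hwM

lemma tendsto_div_cobounded (hφ : IsExteriorMap Γ φ c) :
    Tendsto (fun w => ψ w / w) (Bornology.cobounded ℂ) (𝓝 (c : ℂ)) := by
  have hlim := (hφ.tendsto.comp (hψ.tendsto_cobounded hΓ hφb_eq hφb_cont)).inv₀
    (inv_ne_zero (Complex.ofReal_ne_zero.2 hφ.cpos.ne'))
  rw [inv_inv] at hlim
  refine hlim.congr' ?_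
  filter_upwards [eventually_cobounded_lt_norm 1] with w hw
  rw [Function.comp_apply, (hψ.inv w hw).2, inv_div]

lemma tendsto_inv_pow_sub_eval (c : ℝ) {n : ℕ} {F : Polynomial ℂ} (hF : IsFaberPoly Γ φ n F) :
    Tendsto (fun u => u⁻¹ ^ n - F.eval (diskParamOf ψ c u / u)) (𝓝[≠] 0) (𝓝 0) := by
  refine ((hF.comp (hψ.tendsto_cobounded hΓ hφb_eq hφb_cont)).comp
    tendsto_inv₀_nhdsNE_zero).congr' ?_
  filter_upwards [self_mem_nhdsWithin, mem_nhdsWithin_of_mem_nhds (Metric.ball_mem_nhds 0 one_pos)]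
    with u hu0 hu
  rw [Function.comp_apply, Function.comp_apply, (hψ.inv _ (one_lt_norm_inv hu hu0)).2,
    diskParamOf_div ψ c hu0]

end IsExteriorParam

/-! ### Orientation of a loop -/

/-- `τ` is a continuous lift to `ℝ` of an injective self-map of the circle `ℝ / Tℤ`. The implication
from right to left says that `τ` descends to the circle. -/
structure IsInjectiveCircleLift (τ : ℝ → ℝ) (T : ℝ) : Prop where
  continuous : Continuous τ
  apply_sub_iff : ∀ s t, (∃ k : ℤ, τ t - τ s = k * T) ↔ ∃ n : ℤ, t - s = n * T

lemma exists_int_forall_apply_add_eq {τ : ℝ → ℝ} (hτ : Continuous τ) {T : ℝ} (hT : T ≠ 0)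
    (h : ∀ s, ∃ k : ℤ, τ (s + T) - τ s = k * T) : ∃ m : ℤ, ∀ s, τ (s + T) = τ s + m * T := by
  choose k hk using h
  have hk_eq : (fun s => (k s : ℝ)) = fun s => (τ (s + T) - τ s) / T := by
    ext s
    rw [hk, mul_div_cancel_right₀ _ hT]
  have hcont : Continuous k := by
    refine Int.isClosedEmbedding_coe_real.isInducing.continuous_iff.2 (Continuous.congr ?_
      (congrFun hk_eq.symm))
    fun_prop
  refine ⟨k 0, fun s => ?_⟩
  rw [← PreconnectedSpace.constant inferInstance hcont (x := s), ← hk]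
  ring

lemma apply_add_int_mul {τ : ℝ → ℝ} {T : ℝ} {m : ℤ} (h : ∀ s, τ (s + T) = τ s + m * T) (n : ℤ)
    (s : ℝ) : τ (s + n * T) = τ s + n * m * T := by
  have hper : Function.Periodic (fun s => τ s - m * s) T := fun s => by
    simp only [h]
    ring
  linarith [hper.int_mul n s]

lemma exists_apply_add_half_period_eq {g : ℝ → ℝ} {T : ℝ} (hg : Continuous g)
    (hT : Function.Periodic g T) : ∃ s, g (s + T / 2) = g s := by
  have hcont : Continuous fun s => g (s + T / 2) - g s := by fun_prop
  have hneg : g (T / 2 + T / 2) - g (T / 2) = -(g (0 + T / 2) - g 0) := by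
    rw [add_halves, zero_add, ← zero_add T, hT, zero_add]
    ring
  obtain ⟨s, hs⟩ : (0 : ℝ) ∈ range fun s => g (s + T / 2) - g s := by
    rcases le_total 0 (g (0 + T / 2) - g 0) with h0 | h0
    · exact mem_range_of_exists_le_of_exists_ge hcont ⟨T / 2, by linarith⟩ ⟨0, h0⟩
    · exact mem_range_of_exists_le_of_exists_ge hcont ⟨0, h0⟩ ⟨T / 2, by linarith⟩
  exact ⟨s, sub_eq_zero.1 hs⟩

namespace IsInjectiveCircleLift

variable {τ : ℝ → ℝ} {T : ℝ} {m : ℤ} (h : IsInjectiveCircleLift τ T)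
include h

lemma exists_degree (hT : T ≠ 0) : ∃ m : ℤ, ∀ s, τ (s + T) = τ s + m * T :=
  exists_int_forall_apply_add_eq h.continuous hT fun s =>
    (h.apply_sub_iff s (s + T)).2 ⟨1, by push_cast; ring⟩

variable (hT : 0 < T) (hm : ∀ s, τ (s + T) = τ s + m * T)
include hT hm

lemma degree_ne_zero : m ≠ 0 := by
  rintro rfl
  obtain ⟨s, hs⟩ := exists_apply_add_half_period_eq h.continuous fun s => by simpa using hm s
  obtain ⟨n, hn⟩ := (h.apply_sub_iff s (s + T / 2)).1 ⟨0, by simp [hs]⟩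
  have hn2 : ((n * 2 : ℤ) : ℝ) = (1 : ℤ) := by
    push_cast
    exact mul_right_cancel₀ hT.ne' (by linarith)
  exact absurd (Int.cast_injective hn2) (by lia)

lemma injective : Function.Injective τ := by
  intro s t hst
  obtain ⟨n, hn⟩ := (h.apply_sub_iff s t).1 ⟨0, by simp [hst]⟩
  have hlift := apply_add_int_mul hm n s
  rw [← hn, add_sub_cancel, ← hst, left_eq_add] at hlift
  have hn0 : n = 0 := by simpa [h.degree_ne_zero hT hm, hT.ne'] using hlift
  rw [hn0, Int.cast_zero, zero_mul, sub_eq_zero] at hn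
  exact hn.symm

lemma degree_eq_one_or_neg_one : m = 1 ∨ m = -1 := by
  have hle : τ 0 + T ≤ τ (0 + m * T) := by
    have hm2 : (1 : ℝ) ≤ m * m := by
      exact_mod_cast Order.one_le_iff_pos.2 (mul_self_pos.2 (h.degree_ne_zero hT hm))
    rw [apply_add_int_mul hm m 0]
    gcongr
    exact le_mul_of_one_le_left hT.le hm2
  obtain ⟨s, hs⟩ := mem_range_of_exists_le_of_exists_ge h.continuous ⟨0, by linarith⟩ ⟨_, hle⟩
  obtain ⟨n, hn⟩ := (h.apply_sub_iff 0 s).1 ⟨1, by simp [hs]⟩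
  have hlift := apply_add_int_mul hm n 0
  rw [← hn, add_sub_cancel, hs, add_right_inj] at hlift
  have hnm : n * m = 1 := by exact_mod_cast (mul_eq_right₀ hT.ne').1 hlift.symm
  exact Int.isUnit_iff.1 (IsUnit.of_mul_eq_one_right n hnm)

end IsInjectiveCircleLift

lemma exists_orderIso_coe_eq {τ : ℝ → ℝ} (hτ : Continuous τ) (hinj : Function.Injective τ) {T : ℝ}
    (hT : 0 < T) (h : ∀ s, τ (s + T) = τ s + T) : ∃ e : ℝ ≃o ℝ, ⇑e = τ := by
  have hmono : StrictMono τ := (hτ.strictMono_of_inj hinj).resolve_right fun hanti => by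
    linarith [h 0, hanti (show (0 : ℝ) < 0 + T by linarith)]
  have hlift (n : ℤ) : τ (0 + n * T) = τ 0 + n * T := by
    rw [apply_add_int_mul (τ := τ) (m := 1) (by simpa using h), Int.cast_one, mul_one]
  refine ⟨hmono.orderIsoOfSurjective τ fun y => ?_, hmono.coe_orderIsoOfSurjective τ _⟩
  refine mem_range_of_exists_le_of_exists_ge hτ ⟨0 + ⌊(y - τ 0) / T⌋ * T, ?_⟩
    ⟨0 + ⌈(y - τ 0) / T⌉ * T, ?_⟩
  · rw [hlift]
    linarith [(le_div_iff₀ hT).1 (Int.floor_le ((y - τ 0) / T))]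
  · rw [hlift]
    linarith [(div_le_iff₀ hT).1 (Int.le_ceil ((y - τ 0) / T))]

lemma exists_continuous_circleMap_eq {q : ℝ → ℂ} (hq : Continuous q) (h1 : ∀ s, ‖q s‖ = 1) :
    ∃ τ : ℝ → ℝ, Continuous τ ∧ ∀ s, circleMap 0 1 (τ s) = q s := by
  let q' : C(ℝ, Circle) := ⟨fun s => ⟨q s, mem_sphere_zero_iff_norm.2 (h1 s)⟩, hq.subtype_mk _⟩
  obtain ⟨τ, ⟨-, hτ⟩, -⟩ := Circle.isCoveringMap_exp.existsUnique_continuousMap_lifts q' 0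
    (Complex.arg (q' 0)) (Circle.exp_arg _)
  refine ⟨τ, τ.continuous, fun s => ?_⟩
  rw [circleMap_zero, Complex.ofReal_one, one_mul, ← Circle.coe_exp]
  exact congrArg ((↑) : Circle → ℂ) (congrFun hτ s)

lemma circleMap_one_eq_iff {a b : ℝ} :
    circleMap 0 1 a = circleMap 0 1 b ↔ ∃ n : ℤ, a - b = n * (2 * Real.pi) := by
  simp only [circleMap_zero, Complex.ofReal_one, one_mul, ← Circle.coe_exp, Circle.coe_inj,
    Circle.exp_eq_exp, sub_eq_iff_eq_add']

lemma IsDiniSmoothLoop.exists_orderIso_circleMap_eq {g g' : ℝ → ℂ} (hg : IsDiniSmoothLoop g g')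
    {χ : ℂ → ℂ} (hχ : ContinuousOn χ (range g)) (hinj : InjOn χ (range g))
    (hnorm : ∀ z ∈ range g, ‖χ z‖ = 1) :
    ∃ (f f' : ℝ → ℂ) (τ : ℝ ≃o ℝ), IsDiniSmoothLoop f f' ∧ range f = range g ∧
      (∀ s, τ (s + 2 * Real.pi) = τ s + 2 * Real.pi) ∧ ∀ s, circleMap 0 1 (τ s) = χ (f s) := by
  obtain ⟨τ, hτ, hτχ⟩ := exists_continuous_circleMap_eq
    (hχ.comp_continuous hg.continuous mem_range_self) fun s => hnorm _ (mem_range_self s)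
  have hlift : IsInjectiveCircleLift τ (2 * Real.pi) := by
    refine ⟨hτ, fun s t => ?_⟩
    rw [← circleMap_one_eq_iff, hτχ, hτχ, Function.comp_apply, Function.comp_apply,
      hinj.eq_iff (mem_range_self t) (mem_range_self s)]
    refine ⟨fun h => hg.inj s t h.symm, fun ⟨n, hn⟩ => ?_⟩
    rw [← hg.periodic.int_mul n s, ← hn, add_sub_cancel]
  obtain ⟨m, hm⟩ := hlift.exists_degree Real.two_pi_pos.ne'
  have hτinj := hlift.injective Real.two_pi_pos hm
  rcases hlift.degree_eq_one_or_neg_one Real.two_pi_pos hm with rfl | rfl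
  · have hadd (s : ℝ) : τ (s + 2 * Real.pi) = τ s + 2 * Real.pi := by simpa using hm s
    obtain ⟨e, rfl⟩ := exists_orderIso_coe_eq hτ hτinj Real.two_pi_pos hadd
    exact ⟨g, g', e, hg, rfl, hadd, hτχ⟩
  · have hadd (s : ℝ) : τ (-(s + 2 * Real.pi)) = τ (-s) + 2 * Real.pi := by
      have hs := hm (-(s + 2 * Real.pi))
      rw [neg_add, neg_add_cancel_right, ← neg_add] at hs
      push_cast at hs
      linarith
    obtain ⟨e, he⟩ := exists_orderIso_coe_eq (hτ.comp continuous_neg)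
      (hτinj.comp neg_injective) Real.two_pi_pos hadd
    refine ⟨_, _, e, hg.comp_neg, neg_surjective.range_comp g, ?_, ?_⟩
    · rwa [he]
    · exact fun s => by rw [he]; exact hτχ (-s)

/-! ### Faber polynomials on a Dini-smooth curve -/

lemma abs_supNorm_sub_le {Γ : Set ℂ} (hne : Γ.Nonempty) {g : ℂ → ℂ} {a ε : ℝ}
    (h : ∀ z ∈ Γ, |‖g z‖ - a| ≤ ε) : |supNorm Γ g - a| ≤ ε := by
  have hle : ∀ b ∈ (fun z => ‖g z‖) '' Γ, b ≤ a + ε := by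
    rintro _ ⟨z, hz, rfl⟩
    linarith [(abs_le.1 (h z hz)).2]
  obtain ⟨z, hz⟩ := hne
  have hsup : supNorm Γ g ≤ a + ε := csSup_le ⟨_, z, hz, rfl⟩ hle
  have hz_le : ‖g z‖ ≤ supNorm Γ g := le_csSup ⟨_, hle⟩ ⟨z, hz, rfl⟩
  rw [abs_le]
  constructor <;> linarith [(abs_le.1 (h z hz)).1]

lemma tendsto_supNorm_of_tendstoUniformlyOn {ι : Type*} {l : Filter ι} {Γ : Set ℂ}
    (hne : Γ.Nonempty) {G : ι → ℂ → ℂ} {a : ℝ}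
    (h : TendstoUniformlyOn (fun i z => ‖G i z‖) (fun _ => a) l Γ) :
    Tendsto (fun i => supNorm Γ (G i)) l (𝓝 a) := by
  refine Metric.tendsto_nhds.2 fun ε hε => ?_
  filter_upwards [Metric.tendstoUniformlyOn_iff.1 h (ε / 2) (half_pos hε)] with i hi
  refine (abs_supNorm_sub_le hne fun z hz => ?_).trans_lt (half_lt_self hε)
  rw [← Real.dist_eq, dist_comm]
  exact (hi z hz).le

lemma tendstoUniformlyOn_inv_pow_mul_one {Γ : Set ℂ} {χ : ℂ → ℂ} {G : ℕ → ℂ → ℂ}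
    (hχ : ∀ z ∈ Γ, ‖χ z‖ = 1)
    (h : TendstoUniformlyOn (fun n z => G n z - χ z ^ n) (fun _ => 0) atTop Γ) :
    TendstoUniformlyOn (fun n z => (χ z ^ n)⁻¹ * G n z) (fun _ => 1) atTop Γ := by
  rw [Metric.tendstoUniformlyOn_iff] at h ⊢
  intro ε hε
  filter_upwards [h ε hε] with n hn z hz
  have hpow : χ z ^ n ≠ 0 := pow_ne_zero _ (norm_ne_zero_iff.1 (by simp [hχ z hz]))
  have hlt := hn z hz
  rw [dist_zero_left] at hlt
  rwa [dist_comm, dist_eq_norm, ← inv_mul_cancel₀ hpow, ← mul_sub, norm_mul, norm_inv, norm_pow,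
    hχ z hz, one_pow, inv_one, one_mul]

namespace IsExteriorParam

variable {Γ : Set ℂ} {φ ψ φb : ℂ → ℂ} {c : ℝ} (hψ : IsExteriorParam Γ φ ψ)
  (hφb_circle : ∀ w : ℂ, ‖w‖ = 1 → φb (ψ w) = w)
include hψ hφb_circle

lemma norm_eq_one_and_apply_eq {z : ℂ} (hz : z ∈ Γ) : ‖φb z‖ = 1 ∧ ψ (φb z) = z := by
  obtain ⟨w, hw, rfl⟩ := hψ.boundary_surj z hz
  rw [hφb_circle w hw]
  exact ⟨hw, rfl⟩

lemma exists_isDiskParam (hΓ : IsDiniSmoothJordanCurve Γ) (hφ : IsExteriorMap Γ φ c)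
    (hφb_eq : ∀ z ∈ exteriorDomain Γ, φb z = φ z)
    (hφb_cont : ContinuousOn φb (exteriorDomain Γ ∪ Γ)) :
    ∃ (f f' : ℝ → ℂ) (τ : ℝ ≃o ℝ), IsDiniSmoothLoop f f' ∧ IsDiskParam (diskParamOf ψ c) f f' τ ∧
      range f = Γ ∧ ∀ s, φb (f s) = (circleMap 0 1 (τ s))⁻¹ := by
  obtain ⟨g, g', hg, hper, hinj, hderiv, hcont, hne, hdini, rfl⟩ := hΓ
  have hφb (z : ℂ) (hz : z ∈ range g) := hψ.norm_eq_one_and_apply_eq hφb_circle hz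
  have hloop : IsDiniSmoothLoop g g' := ⟨hper, hinj, hderiv, hcont, hne, hdini⟩
  obtain ⟨f, f', τ, hf, hrange, hτ, hfτ⟩ := hloop.exists_orderIso_circleMap_eq
    (χ := fun z => (φb z)⁻¹)
    ((hφb_cont.mono subset_union_right).inv₀ fun z hz =>
      norm_ne_zero_iff.1 ((hφb z hz).1 ▸ one_ne_zero))
    (fun z hz w hw h => by rw [← (hφb z hz).2, inv_injective h, (hφb w hw).2])
    fun z hz => by rw [norm_inv, (hφb z hz).1, inv_one]
  have hclosed : IsClosed (range g) :=
    (hper.compact_of_continuous Real.two_pi_pos.ne' hg).isClosed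
  refine ⟨f, f', τ, hf, ⟨?_, fun s => ?_, hτ, hf.continuous_deriv, hf.hasDerivAt⟩, hrange,
    fun s => by rw [hfτ, inv_inv]⟩
  · exact diffContOnCl_diskParamOf hψ.cont (hψ.differentiableOn hclosed hφ)
      (hψ.tendsto_div_cobounded hclosed hφb_eq hφb_cont hφ)
  · rw [diskParamOf_of_ne ψ c (circleMap_ne_center one_ne_zero), hfτ, inv_inv,
      (hφb _ (hrange ▸ mem_range_self s)).2]

lemma tendstoUniformlyOn_eval_sub_pow (hΓ : IsDiniSmoothJordanCurve Γ) (hφ : IsExteriorMap Γ φ c)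
    (hφb_eq : ∀ z ∈ exteriorDomain Γ, φb z = φ z)
    (hφb_cont : ContinuousOn φb (exteriorDomain Γ ∪ Γ)) {F : ℕ → Polynomial ℂ}
    (hF : ∀ n, IsFaberPoly Γ φ n (F n)) :
    TendstoUniformlyOn (fun n z => (F n).eval z - φb z ^ n) (fun _ => 0) atTop Γ := by
  obtain ⟨f, f', τ, hf, hΨ, rfl, hφf⟩ :=
    hψ.exists_isDiskParam hφb_circle hΓ hφ hφb_eq hφb_cont
  have hclosed : IsClosed (range f) :=
    (hf.periodic.compact_of_continuous Real.two_pi_pos.ne' hf.continuous).isClosed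
  have hd (z : ℂ) (hz : z ∉ range f) :
      (∀ u ∈ Metric.closedBall (0 : ℂ) 1, diskParamOf ψ c u - u * z ≠ 0) ∨
        ∫ t in 0..2 * Real.pi, f' t / (f t - z) = 0 := by
    by_cases hzΩ : z ∈ exteriorDomain (range f)
    · refine .inr (integral_deriv_div_sub_eq_zero_of_mem_exteriorDomain hf.hasDerivAt
        hf.continuous_deriv (by simpa using (hf.periodic 0).symm) ?_)
      rwa [← zero_add (2 * Real.pi), hf.periodic.image_uIcc Real.two_pi_pos.ne']
    · exact .inl fun u hu => hψ.diskParamOf_sub_mul_ne_zero hφ.cpos.ne' (not_or.2 ⟨hzΩ, hz⟩) hu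
  have hunif := hΨ.tendstoUniformly_eval_sub_inv_pow hf
    (fun u hu => hψ.exteriorDeriv_diskParamOf_ne_zero hclosed hφ hu) hd
    fun n => hψ.tendsto_inv_pow_sub_eval hclosed hφb_eq hφb_cont c (hF n)
  rw [Metric.tendstoUniformly_iff] at hunif
  refine Metric.tendstoUniformlyOn_iff.2 fun ε hε => (hunif ε hε).mono fun n hn => ?_
  rintro _ ⟨s, rfl⟩
  rw [hφf]
  exact hn s

end IsExteriorParam

/-- If `Γ` is a Dini-smooth Jordan curve, then `φ(z)^{−n} F_n(z) → 1`
uniformly for `z ∈ Γ` (with `φb` the continuous boundary extension of `φ`), and in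
particular `lim_{n→∞} ‖F_n‖_Γ = 1`. -/
theorem faber_norm_tendsto_one_of_diniSmooth
    (Γ : Set ℂ) (φ ψ φb : ℂ → ℂ) (c : ℝ) (F : ℕ → Polynomial ℂ)
    (hΓ : IsDiniSmoothJordanCurve Γ)
    (hφ : IsExteriorMap Γ φ c)
    (hψ : IsExteriorParam Γ φ ψ)
    (hF : ∀ n : ℕ, IsFaberPoly Γ φ n (F n))
    (hφb_eq : ∀ z ∈ exteriorDomain Γ, φb z = φ z)
    (hφb_cont : ContinuousOn φb (exteriorDomain Γ ∪ Γ))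
    (hφb_circle : ∀ w : ℂ, ‖w‖ = 1 → φb (ψ w) = w) :
    TendstoUniformlyOn (fun (n : ℕ) (z : ℂ) => (φb z ^ n)⁻¹ * (F n).eval z)
        (fun _ => 1) Filter.atTop Γ ∧
    Filter.Tendsto (fun n : ℕ => supNorm Γ (fun z => (F n).eval z)) Filter.atTop (nhds 1) := by
  have hnorm (z : ℂ) (hz : z ∈ Γ) : ‖φb z‖ = 1 :=
    (hψ.norm_eq_one_and_apply_eq hφb_circle hz).1
  have hunif := tendstoUniformlyOn_inv_pow_mul_one hnorm
    (hψ.tendstoUniformlyOn_eval_sub_pow hφb_circle hΓ hφ hφb_eq hφb_cont hF)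
  refine ⟨hunif, tendsto_supNorm_of_tendstoUniformlyOn ⟨ψ 1, hψ.boundary 1 norm_one⟩ ?_⟩
  have hunif_norm := uniformContinuous_norm.comp_tendstoUniformlyOn hunif
  simp only [Function.comp_def, norm_one] at hunif_norm
  refine hunif_norm.congr (Eventually.of_forall fun n z hz => ?_)
  simp only [norm_mul, norm_inv, norm_pow, hnorm z hz, one_pow, inv_one, one_mul]

end
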